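/- Let 1<p<∞, α ≤ n/p, and ε>0, and set ν = n/p + ε. From the estimates ‖φψ‖_{H^ν_{p'}} ≤ C‖φ‖_{H^ν_p}‖ψ‖_{H^ν_{p'}} and ‖φψ‖_{L_1} ≤ ‖φ‖_{L_p}‖ψ‖_{L_{p'}}, multilinear complex interpolation yields ‖φψ‖_{H^α_s} ≤ C‖φ‖_{H^α_p}‖ψ‖_{H^α_{p'}} for all φ,ψ ∈ C_c^∞(ℝⁿ), where s = (n+pε)/(n+pε−α). -/

import Mathlib

open MeasureTheory FourierTransform Real Metric Complex
open scoped ENNReal Topology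

noncomputable section

/-- Euclidean space ℝⁿ. -/
abbrev Euc (n : ℕ) := EuclideanSpace ℝ (Fin n)

/-- A test function: infinitely differentiable with compact support (`φ ∈ C_c^∞(ℝⁿ)`). -/
def IsTest {n : ℕ} (φ : Euc n → ℂ) : Prop :=
  ContDiff ℝ (⊤ : ℕ∞) φ ∧ HasCompactSupport φ

/-- The Bessel potential `(1-Δ)^{α/2} f`, realized via the Fourier transform:
`𝓕⁻¹ ((1+|ξ|²)^{α/2} 𝓕 f)`. -/
def besselPotential (n : ℕ) (α : ℝ) (f : Euc n → ℂ) : Euc n → ℂ :=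
  𝓕⁻ (fun ξ : Euc n => (((1 + ‖ξ‖ ^ 2) ^ (α / 2) : ℝ) : ℂ) * 𝓕 f ξ)

/-- The Bessel-potential Sobolev norm `‖f‖_{H^α_p} = ‖(1-Δ)^{α/2} f‖_{L_p}`,
with `p ∈ [1,∞]` an extended real exponent. -/
def HNormE (n : ℕ) (α : ℝ) (p : ℝ≥0∞) (f : Euc n → ℂ) : ℝ :=
  (eLpNorm (besselPotential n α f) p volume).toReal

/-- The Bessel-potential Sobolev norm, for a real exponent `p`. -/
def HNorm (n : ℕ) (α p : ℝ) (f : Euc n → ℂ) : ℝ :=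
  HNormE n α (ENNReal.ofReal p) f

/-- Membership of a function in `H^α_p`. -/
def MemH (n : ℕ) (α p : ℝ) (f : Euc n → ℂ) : Prop :=
  eLpNorm (besselPotential n α f) (ENNReal.ofReal p) volume < ⊤

/-- The Hölder conjugate exponent `p' = p/(p-1)` (as a real number, for `1 < p < ∞`). -/
def conjExp (p : ℝ) : ℝ := p / (p - 1)

/-- The Hölder conjugate exponent as an extended real exponent (`1' = ∞`). -/
def conjExpE (p : ℝ) : ℝ≥0∞ := if p ≤ 1 then ∞ else ENNReal.ofReal (p / (p - 1))

/-- Distributions, modelled as functionals on functions on ℝⁿ;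
they are only ever applied to (products of) test functions. -/
def Distr (n : ℕ) := (Euc n → ℂ) → ℂ

/-- The product of a function and a distribution: `(φμ)(ψ) = μ(φψ)`. -/
def distMul {n : ℕ} (φ : Euc n → ℂ) (μ : Distr n) : Distr n :=
  fun ψ => μ (fun x => φ x * ψ x)

/-- `μ` lies in `H^{-γ}_r` with constant `C`: `|⟨μ, ψ⟩| ≤ C‖ψ‖_{H^γ_{r'}}` for all test
functions `ψ` (`C_c^∞` being dense in `H^γ_{r'}`, this realizes the dual norm). -/
def NegBound (n : ℕ) (γ r : ℝ) (μ : Distr n) (C : ℝ) : Prop :=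
  0 ≤ C ∧ ∀ ψ : Euc n → ℂ, IsTest ψ → ‖μ ψ‖ ≤ C * HNormE n γ (conjExpE r) ψ

/-- Membership `μ ∈ H^{-γ}_r` for a distribution `μ`. -/
def MemNeg (n : ℕ) (γ r : ℝ) (μ : Distr n) : Prop := ∃ C, NegBound n γ r μ C

/-- The norm `‖μ‖_{H^{-γ}_r}`, as the best constant. -/
def negNorm (n : ℕ) (γ r : ℝ) (μ : Distr n) : ℝ := sInf {C | NegBound n γ r μ C}

/-- `μ ∈ H^{-γ}_{r,loc}`: every localization `φμ` by a test function lies in `H^{-γ}_r`. -/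
def MemNegLoc (n : ℕ) (γ r : ℝ) (μ : Distr n) : Prop :=
  ∀ φ : Euc n → ℂ, IsTest φ → MemNeg n γ r (distMul φ μ)

/-- `μ` is a multiplier from `H^α_p` to `H^{-α}_p` with constant `C`:
`‖μφ‖_{H^{-α}_p} ≤ C ‖φ‖_{H^α_p}` for all test functions `φ`. -/
def MulBound (n : ℕ) (α p : ℝ) (μ : Distr n) (C : ℝ) : Prop :=
  0 ≤ C ∧ ∀ φ : Euc n → ℂ, IsTest φ → negNorm n α p (distMul φ μ) ≤ C * HNorm n α p φ

/-- `μ ∈ M[H^α_p → H^{-α}_p]`. -/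
def IsMultiplier (n : ℕ) (α p : ℝ) (μ : Distr n) : Prop :=
  MemNegLoc n α p μ ∧ ∃ C, MulBound n α p μ C

/-- The multiplier norm `‖μ‖_{M^α_p}`. -/
def mulNorm (n : ℕ) (α p : ℝ) (μ : Distr n) : ℝ := sInf {C | MulBound n α p μ C}

/-- A fixed admissible cutoff: smooth, compactly supported, nonnegative, `≡ 1` on the
unit ball. -/
def IsCutoff {n : ℕ} (η : Euc n → ℝ) : Prop :=
  ContDiff ℝ (⊤ : ℕ∞) η ∧ HasCompactSupport η ∧ (∀ x, 0 ≤ η x) ∧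
    ∀ x ∈ closedBall (0 : Euc n) 1, η x = 1

/-- The translated cutoff `η(· − z)`, as a complex-valued function. -/
def shiftCutoff {n : ℕ} (η : Euc n → ℝ) (z : Euc n) : Euc n → ℂ :=
  fun x => ((η (x - z) : ℝ) : ℂ)

/-- `u ∈ H^α_{p,unif}` (with respect to the cutoff `η`). -/
def MemHUnif (n : ℕ) (η : Euc n → ℝ) (α p : ℝ) (u : Euc n → ℂ) : Prop :=
  BddAbove (Set.range fun z : Euc n => HNorm n α p (fun x => shiftCutoff η z x * u x))

/-- The norm `‖u‖_{α,p,unif} = sup_z ‖η(·-z)u‖_{H^α_p}`. -/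
def unifNorm (n : ℕ) (η : Euc n → ℝ) (α p : ℝ) (u : Euc n → ℂ) : ℝ :=
  ⨆ z : Euc n, HNorm n α p (fun x => shiftCutoff η z x * u x)

/-- `μ ∈ H^{-γ}_{r,unif}` (for a distribution `μ`). -/
def MemNegUnif (n : ℕ) (η : Euc n → ℝ) (γ r : ℝ) (μ : Distr n) : Prop :=
  (∀ z : Euc n, MemNeg n γ r (distMul (shiftCutoff η z) μ)) ∧
    BddAbove (Set.range fun z : Euc n => negNorm n γ r (distMul (shiftCutoff η z) μ))

/-- The norm `‖μ‖_{-γ,r,unif} = sup_z ‖η(·-z)μ‖_{H^{-γ}_r}`. -/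
def negUnifNorm (n : ℕ) (η : Euc n → ℝ) (γ r : ℝ) (μ : Distr n) : ℝ :=
  ⨆ z : Euc n, negNorm n γ r (distMul (shiftCutoff η z) μ)

/-- Polking's nonlinear operator
`D^η_{ρ,q} u(x) = [∫_0^∞ (∫_{B₁} |u(x+ξy)-u(x)|^ρ dy)^{q/ρ} ξ^{-1-ηq} dξ]^{1/q}`. -/
def Dop (n : ℕ) (η ρ q : ℝ) (u : Euc n → ℂ) (x : Euc n) : ℝ :=
  (∫ ξ in Set.Ioi (0 : ℝ),
      (∫ y in ball (0 : Euc n) 1, ‖u (x + ξ • y) - u x‖ ^ ρ) ^ (q / ρ) *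
        ξ ^ (-1 - η * q)) ^ (1 / q)

/-- The `i`-th standard basis vector of ℝⁿ. -/
def eucBasis (n : ℕ) (i : Fin n) : Euc n := EuclideanSpace.single i 1

/-- The negative Laplacian `-Δ f = -∑ ∂²f/∂x_i²`. -/
def negLap {n : ℕ} (f : Euc n → ℂ) : Euc n → ℂ := fun x =>
  -∑ i : Fin n, fderiv ℝ (fun y => fderiv ℝ f y (eucBasis n i)) x (eucBasis n i)

/-- The polyharmonic operator `(-Δ)^m`. -/
def polyharmonic (n m : ℕ) (f : Euc n → ℂ) : Euc n → ℂ := negLap^[m] f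

/-- The Schrödinger-type operator `L u = (-Δ)^m u + q·u`, viewed as a distribution when
applied to a (test) function `u`. -/
def schrodingerOp (n m : ℕ) (q : Distr n) (u : Euc n → ℂ) : Distr n :=
  fun ψ => (∫ x : Euc n, polyharmonic n m u x * ψ x) + q (fun x => u x * ψ x)

/-- Boundedness of `L = (-Δ)^m + q` from `H^m_p` to `H^{-m}_p`: defined first on test
functions (and then extended by density). -/
def LBounded (n m : ℕ) (p : ℝ) (q : Distr n) : Prop :=
  ∃ C, 0 ≤ C ∧ ∀ u : Euc n → ℂ, IsTest u →
    MemNeg n m p (schrodingerOp n m q u) ∧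
      negNorm n m p (schrodingerOp n m q u) ≤ C * HNorm n m p u

end

/-!
The product estimate is proved directly, the `ε` of room replacing complex interpolation. For
`0 < β < 1` the operator `(1 - Δ) ^ (β / 2)` is an integral of first differences against a Lévy
measure built from the heat kernel, so `J ^ β (u v) - u J ^ β v - v J ^ β u` is controlled by
products of differences of `u` and `v`, each of which costs half of the derivatives. Iterating
this Leibniz rule reduces `H^α_p · H^α_q → H^α_s` to Hölder's inequality and Sobolev embedding,
both available when `q ≤ p`. That restriction is forced by the module estimate: testing it on
`u = g (l • ·)` and `v = 1` near `0` and letting `l → ∞` gives `q ≤ p` as soon as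
`H^ν_p · H^ν_q → H^ν_q`.
-/

namespace BesselProduct

open scoped SchwartzMap

noncomputable section

section Characters

lemma norm_one_sub_fourierChar_le (r : ℝ) : ‖1 - (𝐞 r : ℂ)‖ ≤ 2 * π * |r| := by
  rw [norm_sub_rev, Real.fourierChar_apply, mul_comm _ Complex.I]
  refine (Real.norm_exp_I_mul_ofReal_sub_one_le (x := 2 * π * r)).trans_eq ?_
  rw [Real.norm_eq_abs, abs_mul, abs_of_pos Real.two_pi_pos]

@[fun_prop]
lemma continuous_fourierChar_coe : Continuous fun r : ℝ => (𝐞 r : ℂ) :=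
  continuous_subtype_val.comp Real.continuous_fourierChar

lemma fourierChar_add (r s : ℝ) : (𝐞 (r + s) : ℂ) = 𝐞 r * 𝐞 s := by
  rw [AddChar.map_add_eq_mul, Circle.coe_mul]

end Characters

variable {V : Type*} [NormedAddCommGroup V]

section Symbol

/-- The symbol `⟨ξ⟩ ^ a = (1 + ‖ξ‖ ^ 2) ^ (a / 2)` of the Bessel potential of order `a`. -/
def besselSymbol (a : ℝ) (ξ : V) : ℝ := (1 + ‖ξ‖ ^ 2) ^ (a / 2)

lemma besselSymbol_pos (a : ℝ) (ξ : V) : 0 < besselSymbol a ξ := by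
  unfold besselSymbol
  positivity

lemma besselSymbol_add (a b : ℝ) (ξ : V) :
    besselSymbol (a + b) ξ = besselSymbol a ξ * besselSymbol b ξ := by
  rw [besselSymbol, add_div, Real.rpow_add (by positivity)]
  rfl

lemma besselSymbol_zero (ξ : V) : besselSymbol 0 ξ = 1 := by simp [besselSymbol]

lemma besselSymbol_two (ξ : V) : besselSymbol 2 ξ = 1 + ‖ξ‖ ^ 2 := by simp [besselSymbol]

lemma norm_rpow_le_besselSymbol {a : ℝ} (ha : 0 ≤ a) (ξ : V) : ‖ξ‖ ^ a ≤ besselSymbol a ξ := by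
  rw [besselSymbol, show a = 2 * (a / 2) by ring, Real.rpow_mul (norm_nonneg ξ), Real.rpow_two,
    show 2 * (a / 2) / 2 = a / 2 by ring]
  gcongr
  linarith

@[fun_prop]
lemma continuous_besselSymbol (a : ℝ) : Continuous (besselSymbol a : V → ℝ) :=
  Continuous.rpow_const (by fun_prop) fun _ => Or.inl (by positivity)

/-- Peetre's inequality. -/
lemma besselSymbol_add_le {e : ℝ} (he : 0 ≤ e) (ξ η : V) :
    besselSymbol e (ξ + η) ≤ 2 ^ (e / 2) * (besselSymbol e ξ * besselSymbol e η) := by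
  have norm_sq_add_le : ‖ξ + η‖ ^ 2 ≤ (‖ξ‖ + ‖η‖) ^ 2 := by
    gcongr
    exact norm_add_le ξ η
  unfold besselSymbol
  rw [← Real.mul_rpow (by positivity) (by positivity),
    ← Real.mul_rpow (by positivity) (by positivity)]
  gcongr
  nlinarith [sq_nonneg (‖ξ‖ - ‖η‖), sq_nonneg (‖ξ‖ * ‖η‖)]

variable [InnerProductSpace ℝ V]

lemma hasTemperateGrowth_besselSymbol (a : ℝ) :
    Function.HasTemperateGrowth fun ξ : V => (besselSymbol a ξ : ℂ) := by
  unfold besselSymbol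
  fun_prop

end Symbol

variable [InnerProductSpace ℝ V]

section SchwartzOperators

/-- The first difference `f - f (· - y)` of a Schwartz function. -/
def difference (y : V) (f : 𝓢(V, ℂ)) : 𝓢(V, ℂ) := f - SchwartzMap.compSubConstCLM ℂ y f

lemma difference_apply (y : V) (f : 𝓢(V, ℂ)) (x : V) : difference y f x = f x - f (x - y) := rfl

/-- The pointwise product of Schwartz functions. -/
def schwartzMul (u v : 𝓢(V, ℂ)) : 𝓢(V, ℂ) :=
  SchwartzMap.pairing (ContinuousLinearMap.mul ℂ ℂ) u v

lemma schwartzMul_apply (u v : 𝓢(V, ℂ)) (x : V) : schwartzMul u v x = u x * v x := by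
  rw [schwartzMul, SchwartzMap.pairing_apply_apply, ContinuousLinearMap.mul_apply']

variable [FiniteDimensional ℝ V] [MeasurableSpace V] [BorelSpace V]

lemma schwartz_ext_fourier {f g : 𝓢(V, ℂ)} (h : ∀ ξ, 𝓕 f ξ = 𝓕 g ξ) : f = g :=
  (FourierTransform.fourierCLE ℂ 𝓢(V, ℂ)).injective (SchwartzMap.ext h)

lemma fourier_fourierMultiplierCLM {m : V → ℂ} (hm : m.HasTemperateGrowth) (f : 𝓢(V, ℂ)) (ξ : V) :
    𝓕 (SchwartzMap.fourierMultiplierCLM ℂ m f) ξ = m ξ * 𝓕 f ξ := by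
  rw [SchwartzMap.fourierMultiplierCLM_apply, FourierTransform.fourier_fourierInv_eq,
    SchwartzMap.smulLeftCLM_apply_apply hm, smul_eq_mul]

/-- The Bessel potential `J ^ a = (1 - Δ) ^ (a / 2)` on Schwartz functions. -/
def bessel (a : ℝ) : 𝓢(V, ℂ) →L[ℂ] 𝓢(V, ℂ) :=
  SchwartzMap.fourierMultiplierCLM ℂ fun ξ => (besselSymbol a ξ : ℂ)

lemma fourier_bessel (a : ℝ) (f : 𝓢(V, ℂ)) (ξ : V) :
    𝓕 (bessel a f) ξ = besselSymbol a ξ * 𝓕 f ξ :=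
  fourier_fourierMultiplierCLM (hasTemperateGrowth_besselSymbol a) f ξ

lemma bessel_bessel (a b : ℝ) (f : 𝓢(V, ℂ)) : bessel a (bessel b f) = bessel (a + b) f := by
  refine schwartz_ext_fourier fun ξ => ?_
  rw [fourier_bessel, fourier_bessel, fourier_bessel, besselSymbol_add]
  push_cast
  ring

lemma bessel_zero (f : 𝓢(V, ℂ)) : bessel 0 f = f := by
  refine schwartz_ext_fourier fun ξ => ?_
  rw [fourier_bessel, besselSymbol_zero, Complex.ofReal_one, one_mul]

/-- The Laplacian normalised as the Fourier multiplier `‖ξ‖ ^ 2`, that is `-Δ / (4 π ^ 2)`. -/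
def normalizedLaplacian : 𝓢(V, ℂ) →L[ℂ] 𝓢(V, ℂ) :=
  SchwartzMap.fourierMultiplierCLM ℂ fun ξ => ((‖ξ‖ ^ 2 : ℝ) : ℂ)

lemma fourier_normalizedLaplacian (f : 𝓢(V, ℂ)) (ξ : V) :
    𝓕 (normalizedLaplacian f) ξ = ((‖ξ‖ ^ 2 : ℝ) : ℂ) * 𝓕 f ξ :=
  fourier_fourierMultiplierCLM (by fun_prop) f ξ

lemma bessel_add_two (a : ℝ) (f : 𝓢(V, ℂ)) :
    bessel (a + 2) f = bessel a f + bessel a (normalizedLaplacian f) := by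
  rw [← map_add]
  refine schwartz_ext_fourier fun ξ => ?_
  rw [fourier_bessel, fourier_bessel, FourierTransform.fourier_add, add_apply,
    fourier_normalizedLaplacian, besselSymbol_add, besselSymbol_two]
  push_cast
  ring

lemma schwartz_inversion (f : 𝓢(V, ℂ)) (x : V) : f x = ∫ ξ, 𝐞 (inner ℝ ξ x) * 𝓕 f ξ := by
  conv_lhs => rw [← FourierTransform.fourierInv_fourier_eq (F := 𝓢(V, ℂ)) f]
  rw [SchwartzMap.fourierInv_coe, Real.fourierInv_eq]
  rfl

lemma bessel_apply (a : ℝ) (f : 𝓢(V, ℂ)) (x : V) :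
    bessel a f x = ∫ ξ, 𝐞 (inner ℝ ξ x) * ((besselSymbol a ξ : ℂ) * 𝓕 f ξ) := by
  rw [schwartz_inversion]
  simp_rw [fourier_bessel]

lemma integrable_besselSymbol_mul_fourier (a : ℝ) (f : 𝓢(V, ℂ)) :
    Integrable fun ξ => (besselSymbol a ξ : ℂ) * 𝓕 f ξ :=
  (𝓕 (bessel a f)).integrable.congr (.of_forall (fourier_bessel a f))

lemma fourier_compSubConstCLM (y : V) (f : 𝓢(V, ℂ)) (ξ : V) :
    𝓕 (SchwartzMap.compSubConstCLM ℂ y f) ξ = 𝐞 (-inner ℝ y ξ) * 𝓕 f ξ := by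
  rw [SchwartzMap.fourier_coe, SchwartzMap.fourier_coe, Real.fourier_eq, Real.fourier_eq,
    ← integral_const_mul, ← integral_add_right_eq_self _ y]
  refine integral_congr_ae (.of_forall fun v => ?_)
  simp only [SchwartzMap.compSubConstCLM_apply, add_sub_cancel_right, Circle.smul_def,
    smul_eq_mul, inner_add_left, neg_add, fourierChar_add]
  ring

lemma fourier_difference (y : V) (f : 𝓢(V, ℂ)) (ξ : V) :
    𝓕 (difference y f) ξ = (1 - 𝐞 (-inner ℝ y ξ)) * 𝓕 f ξ := by
  rw [difference, ← FourierTransform.fourierCLM_apply (R := ℂ), map_sub, sub_apply,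
    FourierTransform.fourierCLM_apply, FourierTransform.fourierCLM_apply, fourier_compSubConstCLM]
  ring

lemma bessel_difference (a : ℝ) (y : V) (f : 𝓢(V, ℂ)) :
    bessel a (difference y f) = difference y (bessel a f) := by
  refine schwartz_ext_fourier fun ξ => ?_
  rw [fourier_bessel, fourier_difference, fourier_difference, fourier_bessel]
  ring

lemma fourier_fourier_neg_apply (f : 𝓢(V, ℂ)) (x : V) : 𝓕 (𝓕 f) (-x) = f x := by
  change 𝓕⁻ (𝓕 f) x = f x
  rw [FourierTransform.fourierInv_fourier_eq]

lemma fourier_schwartzMul (u v : 𝓢(V, ℂ)) (ζ : V) :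
    𝓕 (schwartzMul u v) ζ = ∫ ξ, 𝓕 u ξ * 𝓕 v (ζ - ξ) := by
  have fourierInv_convolution :
      𝓕⁻ (SchwartzMap.convolution (ContinuousLinearMap.mul ℂ ℂ) (𝓕 u) (𝓕 v)) =
        schwartzMul u v := by
    ext x
    rw [SchwartzMap.fourierInv_apply_eq, SchwartzMap.fourier_convolution, schwartzMul_apply,
      SchwartzMap.compCLMOfContinuousLinearEquiv_apply, Function.comp_apply,
      SchwartzMap.pairing_apply_apply]
    simp only [LinearIsometryEquiv.coe_toContinuousLinearEquiv, LinearIsometryEquiv.coe_neg,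
      ContinuousLinearMap.mul_apply', fourier_fourier_neg_apply]
  rw [← fourierInv_convolution, FourierTransform.fourier_fourierInv_eq,
    SchwartzMap.convolution_apply]
  rfl

end SchwartzOperators

section MinkowskiYoung

variable {X T : Type*} [MeasurableSpace X] [MeasurableSpace T] {μ : Measure X} {ν : Measure T}

lemma eLpNorm'_eq_lintegral_rpow (u : X → ℝ≥0∞) (r : ℝ) :
    eLpNorm' u r μ = (∫⁻ x, u x ^ r ∂μ) ^ (1 / r) := rfl

lemma rpow_one_div_le_of_le_rpow_mul {A B : ℝ≥0∞} {r : ℝ} (hr : 1 ≤ r) (hA : A ≠ ⊤)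
    (h : A ≤ A ^ (1 - 1 / r) * B) : A ^ (1 / r) ≤ B := by
  have hr0 : 0 < r := by linarith
  rcases eq_or_ne A 0 with rfl | hA0
  · rw [ENNReal.zero_rpow_of_pos (by positivity)]
    exact zero_le
  have exponent_nonneg : 0 ≤ 1 - 1 / r := by rwa [sub_nonneg, div_le_one hr0]
  have split : A = A ^ (1 - 1 / r) * A ^ (1 / r) := by
    rw [← ENNReal.rpow_add _ _ hA0 hA, sub_add_cancel, ENNReal.rpow_one]
  refine (ENNReal.mul_le_mul_iff_right (a := A ^ (1 - 1 / r)) ?_ ?_).1 (split ▸ h)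
  · exact (ENNReal.rpow_pos (pos_iff_ne_zero.2 hA0) hA).ne'
  · exact ENNReal.rpow_ne_top_of_nonneg exponent_nonneg hA

lemma lintegral_rpow_sub_one_mul_le {r : ℝ} (hr : 1 ≤ r) {u f : X → ℝ≥0∞}
    (hu : AEMeasurable u μ) (hf : AEMeasurable f μ) :
    ∫⁻ x, u x ^ (r - 1) * f x ∂μ ≤ (∫⁻ x, u x ^ r ∂μ) ^ (1 - 1 / r) * eLpNorm' f r μ := by
  have hr0 : 0 < r := by linarith
  have holder := ENNReal.lintegral_mul_norm_pow_le (hu.pow_const r) (hf.pow_const r)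
    (p := 1 - 1 / r) (q := 1 / r) (by rwa [sub_nonneg, div_le_one hr0]) (by positivity) (by ring)
  simp only [← ENNReal.rpow_mul, mul_one_div_cancel hr0.ne', ENNReal.rpow_one, mul_sub,
    mul_one] at holder
  exact holder

/-- Minkowski's integral inequality. -/
theorem eLpNorm'_le_lintegral_eLpNorm' [SFinite μ] [SFinite ν] {r : ℝ} (hr : 1 ≤ r)
    {u : X → ℝ≥0∞} (hu : Measurable u) (hu_top : ∫⁻ x, u x ^ r ∂μ ≠ ⊤) {F : T → X → ℝ≥0∞}
    (hF : Measurable (Function.uncurry F)) (h : ∀ x, u x ≤ ∫⁻ t, F t x ∂ν) :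
    eLpNorm' u r μ ≤ ∫⁻ t, eLpNorm' (F t) r μ ∂ν := by
  refine rpow_one_div_le_of_le_rpow_mul hr hu_top ?_
  calc ∫⁻ x, u x ^ r ∂μ
      = ∫⁻ x, u x ^ (r - 1) * u x ∂μ := by
        refine lintegral_congr fun x => ?_
        nth_rw 3 [← ENNReal.rpow_one (u x)]
        rw [← ENNReal.rpow_add_of_nonneg _ _ (by linarith) zero_le_one, sub_add_cancel]
    _ ≤ ∫⁻ x, ∫⁻ t, u x ^ (r - 1) * F t x ∂ν ∂μ := by
        gcongr with x
        exact (mul_le_mul_right (h x) _).trans_eq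
          (lintegral_const_mul _ (hF.comp measurable_prodMk_right)).symm
    _ = ∫⁻ t, ∫⁻ x, u x ^ (r - 1) * F t x ∂μ ∂ν := lintegral_lintegral_swap
        (((hu.pow_const _).comp measurable_fst).mul (hF.comp measurable_swap)).aemeasurable
    _ ≤ ∫⁻ t, (∫⁻ x, u x ^ r ∂μ) ^ (1 - 1 / r) * eLpNorm' (F t) r μ ∂ν := by
        gcongr with t
        exact lintegral_rpow_sub_one_mul_le hr hu.aemeasurable
          (hF.comp measurable_prodMk_left).aemeasurable
    _ = (∫⁻ x, u x ^ r ∂μ) ^ (1 - 1 / r) * ∫⁻ t, eLpNorm' (F t) r μ ∂ν := by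
        refine lintegral_const_mul _ (Measurable.pow_const ?_ _)
        exact (hF.pow_const r).lintegral_prod_right'

lemma eLpNorm'_const_mul {r : ℝ} (hr : 0 < r) (c : ℝ≥0∞) {f : X → ℝ≥0∞} (hf : Measurable f) :
    eLpNorm' (fun x => c * f x) r μ = c * eLpNorm' f r μ := by
  simp only [eLpNorm'_eq_lintegral_rpow, ENNReal.mul_rpow_of_nonneg _ _ hr.le]
  rw [lintegral_const_mul _ (hf.pow_const r), ENNReal.mul_rpow_of_nonneg _ _ (by positivity),
    ← ENNReal.rpow_mul, mul_one_div_cancel hr.ne', ENNReal.rpow_one]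

lemma eLpNorm'_le_lintegral_mul_eLpNorm' [SFinite μ] [SFinite ν] {r : ℝ} (hr : 1 ≤ r)
    {u : X → ℂ} (hu : Measurable u) (hu_top : eLpNorm' u r μ ≠ ⊤) {W : T → ℝ≥0∞}
    (hW : Measurable W) {G : T → X → ℂ} (hG : Measurable (Function.uncurry G))
    (h : ∀ x, ‖u x‖ₑ ≤ ∫⁻ t, W t * ‖G t x‖ₑ ∂ν) :
    eLpNorm' u r μ ≤ ∫⁻ t, W t * eLpNorm' (G t) r μ ∂ν := by
  have hr0 : 0 < r := by linarith
  have hu_lintegral : ∫⁻ x, ‖u x‖ₑ ^ r ∂μ ≠ ⊤ := fun h => hu_top <| by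
    rw [eLpNorm'_eq_lintegral_enorm, h, ENNReal.top_rpow_of_pos (by positivity)]
  refine (eLpNorm'_le_lintegral_eLpNorm' hr hu.enorm hu_lintegral
    ((hW.comp measurable_fst).mul hG.enorm) h).trans_eq ?_
  refine lintegral_congr fun t => ?_
  exact eLpNorm'_const_mul hr0 _ (hG.comp measurable_prodMk_left).enorm

/-- Jensen's inequality for the (unnormalised) measure with density `K`. -/
lemma lintegral_mul_rpow_le {q : ℝ} (hq : 1 ≤ q) {K f : X → ℝ≥0∞} (hK : Measurable K)
    (hf : Measurable f) :
    (∫⁻ x, K x * f x ∂μ) ^ q ≤ (∫⁻ x, K x ∂μ) ^ (q - 1) * ∫⁻ x, K x * f x ^ q ∂μ := by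
  have hq0 : 0 < q := by linarith
  have jensen := eLpNorm'_le_eLpNorm'_mul_rpow_measure_univ (μ := μ.withDensity K)
    (f := f) one_pos hq hf.aestronglyMeasurable
  rw [eLpNorm'_eq_lintegral_rpow, eLpNorm'_eq_lintegral_rpow,
    lintegral_withDensity_eq_lintegral_mul _ hK (hf.pow_const 1),
    lintegral_withDensity_eq_lintegral_mul _ hK (hf.pow_const q),
    withDensity_apply _ .univ, Measure.restrict_univ] at jensen
  simp only [Pi.mul_apply, ENNReal.rpow_one, div_one] at jensen
  calc (∫⁻ x, K x * f x ∂μ) ^ q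
      ≤ ((∫⁻ x, K x * f x ^ q ∂μ) ^ (1 / q) * (∫⁻ x, K x ∂μ) ^ (1 - 1 / q)) ^ q := by gcongr
    _ = (∫⁻ x, K x ∂μ) ^ (q - 1) * ∫⁻ x, K x * f x ^ q ∂μ := by
        rw [ENNReal.mul_rpow_of_nonneg _ _ hq0.le, ← ENNReal.rpow_mul, ← ENNReal.rpow_mul,
          one_div_mul_cancel hq0.ne', ENNReal.rpow_one, sub_mul, one_mul,
          one_div_mul_cancel hq0.ne', mul_comm]

lemma eLpNorm'_le_rpow_mul_of_le {q r : ℝ} (hq : 0 < q) (hqr : q ≤ r) {f : X → ℝ≥0∞}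
    (hf : Measurable f) {S : ℝ≥0∞} (hS : ∀ x, f x ≤ S) :
    eLpNorm' f r μ ≤ S ^ (1 - q / r) * eLpNorm' f q μ ^ (q / r) := by
  have hr : 0 < r := hq.trans_le hqr
  have interpolate : ∫⁻ x, f x ^ r ∂μ ≤ S ^ (r - q) * ∫⁻ x, f x ^ q ∂μ := by
    rw [← lintegral_const_mul _ (hf.pow_const q)]
    gcongr with x
    calc f x ^ r = f x ^ (r - q) * f x ^ q := by
          rw [← ENNReal.rpow_add_of_nonneg _ _ (by linarith) hq.le, sub_add_cancel]
      _ ≤ S ^ (r - q) * f x ^ q := by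
          gcongr
          exact hS x
  calc eLpNorm' f r μ ≤ (S ^ (r - q) * ∫⁻ x, f x ^ q ∂μ) ^ (1 / r) := by
        rw [eLpNorm'_eq_lintegral_rpow]
        gcongr
    _ = S ^ (1 - q / r) * eLpNorm' f q μ ^ (q / r) := by
        rw [eLpNorm'_eq_lintegral_rpow, ENNReal.mul_rpow_of_nonneg _ _ (by positivity),
          ← ENNReal.rpow_mul, ← ENNReal.rpow_mul]
        congr 2 <;> field_simp

variable {G : Type*} [AddCommGroup G] [MeasurableSpace G] [MeasurableAdd₂ G] [MeasurableNeg G]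
  {ρ : Measure G} {K F : G → ℝ≥0∞}

lemma lconvolution_rpow_le {q : ℝ} (hq : 1 ≤ q) (hK : Measurable K) (hF : Measurable F) (x : G) :
    (K ⋆ₗ[ρ] F) x ^ q ≤ (∫⁻ y, K y ∂ρ) ^ (q - 1) * (K ⋆ₗ[ρ] fun y => F y ^ q) x :=
  lintegral_mul_rpow_le hq hK (by fun_prop)

variable [ρ.IsAddLeftInvariant]

lemma lconvolution_le_of_le [ρ.IsNegInvariant] {q : ℝ} (hq : 1 ≤ q) (hK : Measurable K)
    (hF : Measurable F) {B : ℝ≥0∞} (hB : ∀ y, K y ≤ B) (x : G) :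
    (K ⋆ₗ[ρ] F) x ≤ ((∫⁻ y, K y ∂ρ) ^ (q - 1) * B) ^ (1 / q) * eLpNorm' F q ρ := by
  have hq0 : 0 < q := by linarith
  rw [eLpNorm'_eq_lintegral_rpow, ← ENNReal.mul_rpow_of_nonneg _ _ (by positivity), one_div,
    ENNReal.le_rpow_inv_iff hq0, mul_assoc]
  refine (lconvolution_rpow_le hq hK hF x).trans ?_
  gcongr
  calc ∫⁻ y, K y * F (-y + x) ^ q ∂ρ ≤ ∫⁻ y, B * F (-y + x) ^ q ∂ρ := by
        gcongr with y
        exact hB y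
    _ = B * ∫⁻ y, F y ^ q ∂ρ := by
        rw [lintegral_const_mul _ (by fun_prop)]
        simp only [neg_add_eq_sub]
        rw [lintegral_sub_left_eq_self (fun y => F y ^ q) x]

variable [SFinite ρ]

lemma lintegral_lconvolution (hK : Measurable K) (hF : Measurable F) :
    ∫⁻ x, (K ⋆ₗ[ρ] F) x ∂ρ = (∫⁻ x, K x ∂ρ) * ∫⁻ x, F x ∂ρ := by
  simp only [lconvolution_def]
  rw [lintegral_lintegral_swap (by fun_prop), ← lintegral_mul_const _ hK]
  refine lintegral_congr fun y => ?_
  rw [lintegral_const_mul _ (by fun_prop), lintegral_add_left_eq_self]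

lemma eLpNorm'_lconvolution_le {q : ℝ} (hq : 1 ≤ q) (hK : Measurable K) (hF : Measurable F) :
    eLpNorm' (K ⋆ₗ[ρ] F) q ρ ≤ (∫⁻ y, K y ∂ρ) * eLpNorm' F q ρ := by
  have hq0 : 0 < q := by linarith
  have hFq : Measurable fun y => F y ^ q := hF.pow_const q
  calc eLpNorm' (K ⋆ₗ[ρ] F) q ρ
      ≤ (∫⁻ x, (∫⁻ y, K y ∂ρ) ^ (q - 1) * (K ⋆ₗ[ρ] fun y => F y ^ q) x ∂ρ) ^ (1 / q) := by
        rw [eLpNorm'_eq_lintegral_rpow]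
        gcongr with x
        exact lconvolution_rpow_le hq hK hF x
    _ = ((∫⁻ y, K y ∂ρ) ^ q * ∫⁻ y, F y ^ q ∂ρ) ^ (1 / q) := by
        rw [lintegral_const_mul _ (measurable_lconvolution ρ hK hFq),
          lintegral_lconvolution hK hFq, ← mul_assoc]
        nth_rw 2 [← ENNReal.rpow_one (∫⁻ y, K y ∂ρ)]
        rw [← ENNReal.rpow_add_of_nonneg _ _ (by linarith) zero_le_one, sub_add_cancel]
    _ = (∫⁻ y, K y ∂ρ) * eLpNorm' F q ρ := by
        rw [ENNReal.mul_rpow_of_nonneg _ _ (by positivity), ← ENNReal.rpow_mul,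
          mul_one_div_cancel hq0.ne', ENNReal.rpow_one, eLpNorm'_eq_lintegral_rpow]

/-- Young's convolution inequality for a kernel in `L¹ ∩ L^∞`. -/
theorem eLpNorm'_lconvolution_le_of_le [ρ.IsNegInvariant] {q r : ℝ} (hq : 1 ≤ q) (hqr : q ≤ r)
    (hK : Measurable K) (hF : Measurable F) {B : ℝ≥0∞} (hB : ∀ y, K y ≤ B) :
    eLpNorm' (K ⋆ₗ[ρ] F) r ρ ≤
      (∫⁻ y, K y ∂ρ) ^ (1 - (1 / q - 1 / r)) * B ^ (1 / q - 1 / r) * eLpNorm' F q ρ := by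
  have hq0 : 0 < q := by linarith
  have hr0 : 0 < r := by linarith
  have hqr' : q / r ≤ 1 := (div_le_one hr0).2 hqr
  set M := ∫⁻ y, K y ∂ρ
  calc eLpNorm' (K ⋆ₗ[ρ] F) r ρ
      ≤ ((M ^ (q - 1) * B) ^ (1 / q) * eLpNorm' F q ρ) ^ (1 - q / r) *
          (M * eLpNorm' F q ρ) ^ (q / r) := by
        refine (eLpNorm'_le_rpow_mul_of_le hq0 hqr (measurable_lconvolution ρ hK hF)
          (lconvolution_le_of_le hq hK hF hB)).trans ?_
        gcongr
        exact eLpNorm'_lconvolution_le hq hK hF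
    _ = (M ^ ((q - 1) * (1 / q) * (1 - q / r)) * M ^ (q / r)) * B ^ (1 / q * (1 - q / r)) *
          (eLpNorm' F q ρ ^ (1 - q / r) * eLpNorm' F q ρ ^ (q / r)) := by
        have : 0 ≤ 1 - q / r := by linarith
        have : 0 ≤ 1 / q := by positivity
        simp only [ENNReal.mul_rpow_of_nonneg, *, ENNReal.rpow_mul,
          show 0 ≤ q / r by positivity]
        ring
    _ = M ^ (1 - (1 / q - 1 / r)) * B ^ (1 / q - 1 / r) * eLpNorm' F q ρ := by
        rw [← ENNReal.rpow_add_of_nonneg, ← ENNReal.rpow_add_of_nonneg, sub_add_cancel,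
          ENNReal.rpow_one]
        · congr 3 <;> field_simp
          ring
        · linarith
        · positivity
        · have : 0 ≤ q - 1 := by linarith
          have : 0 ≤ 1 - q / r := by linarith
          positivity
        · positivity

end MinkowskiYoung

section GaussianEstimates

lemma abs_exp_neg_sq_sub_le_of_le {a b : ℝ} (ha : 0 ≤ a) (hab : a ≤ b) :
    |Real.exp (-a ^ 2) - Real.exp (-b ^ 2)| ≤ 2 * |a - b| * Real.exp (-a ^ 2 / 2) := by
  have hasDeriv (s : ℝ) :
      HasDerivAt (fun s : ℝ => Real.exp (-s ^ 2)) (Real.exp (-s ^ 2) * -(2 * s)) s := by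
    simpa using ((hasDerivAt_pow 2 s).neg).exp
  have deriv_le (s : ℝ) (hs : s ∈ Set.Icc a b) :
      ‖Real.exp (-s ^ 2) * -(2 * s)‖ ≤ 2 * Real.exp (-a ^ 2 / 2) := by
    have hs0 : 0 ≤ s := ha.trans hs.1
    have half_le : s * Real.exp (-s ^ 2 / 2) ≤ 1 := by
      rw [neg_div, Real.exp_neg, ← div_eq_mul_inv, div_le_one (Real.exp_pos _)]
      nlinarith [Real.add_one_le_exp (s ^ 2 / 2), sq_nonneg (s - 1)]
    have mono : Real.exp (-s ^ 2 / 2) ≤ Real.exp (-a ^ 2 / 2) := by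
      gcongr
      exact hs.1
    calc ‖Real.exp (-s ^ 2) * -(2 * s)‖
        = 2 * (s * Real.exp (-s ^ 2 / 2)) * Real.exp (-s ^ 2 / 2) := by
          rw [norm_mul, norm_neg, Real.norm_of_nonneg (Real.exp_pos _).le,
            Real.norm_of_nonneg (by positivity), ← add_halves (-s ^ 2), Real.exp_add]
          ring_nf
      _ ≤ 2 * 1 * Real.exp (-a ^ 2 / 2) := by gcongr
      _ = 2 * Real.exp (-a ^ 2 / 2) := by ring
  have mvt := (convex_Icc a b).norm_image_sub_le_of_norm_hasDerivWithin_le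
    (fun s _ => (hasDeriv s).hasDerivWithinAt) deriv_le ⟨hab, le_rfl⟩ ⟨le_rfl, hab⟩
  rw [Real.norm_eq_abs, Real.norm_eq_abs] at mvt
  linarith

lemma abs_exp_neg_sq_sub_le {a b : ℝ} (ha : 0 ≤ a) (hb : 0 ≤ b) :
    |Real.exp (-a ^ 2) - Real.exp (-b ^ 2)| ≤
      2 * |a - b| * (Real.exp (-a ^ 2 / 2) + Real.exp (-b ^ 2 / 2)) := by
  wlog hab : a ≤ b generalizing a b with symm
  · rw [abs_sub_comm, abs_sub_comm a, add_comm]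
    exact symm hb ha (le_of_not_ge hab)
  refine (abs_exp_neg_sq_sub_le_of_le ha hab).trans ?_
  gcongr
  exact le_add_of_nonneg_right (Real.exp_pos _).le

lemma rpow_mul_exp_neg_mul_sq_le {c t θ : ℝ} (hc : 2 ≤ c) (ht : 0 < t) (hθ : 0 ≤ θ)
    (hθ2 : θ ≤ 2) {r : ℝ} (hr : 0 ≤ r) :
    r ^ θ * Real.exp (-(c / t) * r ^ 2) ≤ t ^ (θ / 2) * Real.exp (-(c / t) * r ^ 2 / 2) := by
  set v := r ^ 2 / t with hv
  have hv0 : 0 ≤ v := by positivity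
  have rescale : r ^ θ = t ^ (θ / 2) * v ^ (θ / 2) := by
    rw [← Real.mul_rpow ht.le hv0, hv, mul_div_cancel₀ _ ht.ne', ← Real.rpow_natCast_mul hr]
    congr 1
    push_cast
    ring
  have power_le_exp : v ^ (θ / 2) ≤ Real.exp v :=
    calc v ^ (θ / 2) ≤ (1 + v) ^ (θ / 2) := by gcongr; linarith
      _ ≤ (1 + v) ^ (1 : ℝ) := Real.rpow_le_rpow_of_exponent_le (by linarith) (by linarith)
      _ = v + 1 := by rw [Real.rpow_one, add_comm]
      _ ≤ Real.exp v := Real.add_one_le_exp v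
  calc r ^ θ * Real.exp (-(c / t) * r ^ 2)
      ≤ t ^ (θ / 2) * Real.exp v * Real.exp (-(c / t) * r ^ 2) := by
        rw [rescale]
        gcongr
    _ = t ^ (θ / 2) * Real.exp (v - c * v) := by
        rw [mul_assoc, ← Real.exp_add, hv]
        ring_nf
    _ ≤ t ^ (θ / 2) * Real.exp (-(c / t) * r ^ 2 / 2) := by
        rw [show -(c / t) * r ^ 2 / 2 = -(c * v) / 2 by rw [hv]; ring]
        gcongr
        nlinarith

end GaussianEstimates

section HeatKernel

/-- The density of the heat semigroup generated by `-normalizedLaplacian`: a Gaussian whose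
Fourier transform is `exp (-t * ‖ξ‖ ^ 2)`. -/
def heatKernel (t : ℝ) (y : V) : ℝ :=
  (π / t) ^ ((Module.finrank ℝ V : ℝ) / 2) * Real.exp (-(π ^ 2 / t) * ‖y‖ ^ 2)

lemma heatKernel_nonneg {t : ℝ} (ht : 0 < t) (y : V) : 0 ≤ heatKernel t y := by
  unfold heatKernel
  positivity

lemma heatKernel_le {t : ℝ} (ht : 0 < t) (y : V) :
    heatKernel t y ≤ (π / t) ^ ((Module.finrank ℝ V : ℝ) / 2) := by
  refine mul_le_of_le_one_right (by positivity) (Real.exp_le_one_iff.2 ?_)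
  rw [neg_mul, neg_nonpos]
  positivity

@[fun_prop]
lemma continuous_heatKernel (t : ℝ) : Continuous (heatKernel t : V → ℝ) := by
  unfold heatKernel
  fun_prop

lemma const_mul_exp_eq_heatKernel {t : ℝ} (ht : 0 < t) (y : V) :
    (π / t) ^ ((Module.finrank ℝ V : ℝ) / 2) * Real.exp (-(π ^ 2 / t) * ‖y‖ ^ 2 / 2) =
      2 ^ ((Module.finrank ℝ V : ℝ) / 2) * heatKernel (2 * t) y := by
  rw [heatKernel, ← mul_assoc, ← Real.mul_rpow (by positivity) (by positivity)]
  congr 2 <;> field_simp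

lemma norm_rpow_mul_heatKernel_le {t θ : ℝ} (ht : 0 < t) (hθ : 0 ≤ θ) (hθ2 : θ ≤ 2) (y : V) :
    ‖y‖ ^ θ * heatKernel t y ≤
      t ^ (θ / 2) * 2 ^ ((Module.finrank ℝ V : ℝ) / 2) * heatKernel (2 * t) y := by
  have two_le : 2 ≤ π ^ 2 := by nlinarith [Real.pi_gt_three]
  rw [mul_assoc, ← const_mul_exp_eq_heatKernel ht, heatKernel, mul_left_comm,
    mul_left_comm (t ^ (θ / 2))]
  gcongr _ * ?_
  exact rpow_mul_exp_neg_mul_sq_le two_le ht hθ hθ2 (norm_nonneg y)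

lemma abs_heatKernel_sub_le {t : ℝ} (ht : 0 < t) (y z : V) :
    |heatKernel t z - heatKernel t (z - y)| ≤
      2 * π * 2 ^ ((Module.finrank ℝ V : ℝ) / 2) * (‖y‖ / √t) *
        (heatKernel (2 * t) z + heatKernel (2 * t) (z - y)) := by
  have exponent (w : V) : -(π ^ 2 / t) * ‖w‖ ^ 2 = -(π * ‖w‖ / √t) ^ 2 := by
    rw [div_pow, mul_pow, Real.sq_sqrt ht.le]
    ring
  have gap_le : |π * ‖z‖ / √t - π * ‖z - y‖ / √t| ≤ π * (‖y‖ / √t) := by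
    rw [← sub_div, ← mul_sub, abs_div, abs_mul, abs_of_pos Real.pi_pos,
      abs_of_nonneg (Real.sqrt_nonneg t), mul_div_assoc]
    gcongr
    simpa only [sub_sub_cancel] using abs_norm_sub_norm_le z (z - y)
  have gaussian_le := (abs_exp_neg_sq_sub_le (a := π * ‖z‖ / √t) (b := π * ‖z - y‖ / √t)
    (by positivity) (by positivity)).trans (mul_le_mul_of_nonneg_right
      (mul_le_mul_of_nonneg_left gap_le zero_le_two) (by positivity))
  simp only [← exponent] at gaussian_le
  calc |heatKernel t z - heatKernel t (z - y)|
      = (π / t) ^ ((Module.finrank ℝ V : ℝ) / 2) *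
          |Real.exp (-(π ^ 2 / t) * ‖z‖ ^ 2) - Real.exp (-(π ^ 2 / t) * ‖z - y‖ ^ 2)| := by
        rw [heatKernel, heatKernel, ← mul_sub, abs_mul, abs_of_pos (by positivity)]
    _ ≤ (π / t) ^ ((Module.finrank ℝ V : ℝ) / 2) * (2 * (π * (‖y‖ / √t)) *
          (Real.exp (-(π ^ 2 / t) * ‖z‖ ^ 2 / 2) +
            Real.exp (-(π ^ 2 / t) * ‖z - y‖ ^ 2 / 2))) := by gcongr
    _ = _ := by
        linear_combination (2 * (π * (‖y‖ / √t))) *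
          (const_mul_exp_eq_heatKernel ht z + const_mul_exp_eq_heatKernel ht (z - y))

variable [MeasurableSpace V] [BorelSpace V]

lemma measurable_uncurry_heatKernel :
    Measurable (Function.uncurry (heatKernel : ℝ → V → ℝ)) := by
  unfold Function.uncurry heatKernel
  fun_prop

variable [FiniteDimensional ℝ V]

lemma integral_heatKernel {t : ℝ} (ht : 0 < t) : ∫ y : V, heatKernel t y = 1 := by
  unfold heatKernel
  rw [integral_const_mul, GaussianFourier.integral_rexp_neg_mul_sq_norm (by positivity),
    ← Real.mul_rpow (by positivity) (by positivity), show π / t * (π / (π ^ 2 / t)) = 1 by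
      field_simp, Real.one_rpow]

lemma integrable_heatKernel {t : ℝ} (ht : 0 < t) : Integrable (heatKernel t : V → ℝ) :=
  .of_integral_ne_zero ((integral_heatKernel ht).trans_ne one_ne_zero)

lemma lintegral_enorm_heatKernel {t : ℝ} (ht : 0 < t) : ∫⁻ y : V, ‖heatKernel t y‖ₑ = 1 := by
  rw [← ofReal_integral_norm_eq_lintegral_enorm (integrable_heatKernel ht)]
  simp only [Real.norm_of_nonneg (heatKernel_nonneg ht _), integral_heatKernel ht,
    ENNReal.ofReal_one]

lemma integral_heatKernel_mul_fourierChar {t : ℝ} (ht : 0 < t) (ξ : V) :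
    ∫ y, (heatKernel t y : ℂ) * 𝐞 (-inner ℝ y ξ) = Real.exp (-t * ‖ξ‖ ^ 2) := by
  have gaussian := fourier_gaussian_innerProductSpace (V := V) (b := ((π ^ 2 / t : ℝ) : ℂ))
    (by rw [Complex.ofReal_re]; positivity) ξ
  have constants : (((π / t) ^ ((Module.finrank ℝ V : ℝ) / 2) : ℝ) : ℂ) *
      ((π : ℂ) / ((π ^ 2 / t : ℝ) : ℂ)) ^ ((Module.finrank ℝ V : ℂ) / 2) = 1 := by
    rw [← Complex.ofReal_div, show (Module.finrank ℝ V : ℂ) / 2 =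
      (((Module.finrank ℝ V : ℝ) / 2 : ℝ) : ℂ) by push_cast; rfl,
      ← Complex.ofReal_cpow (by positivity), ← Complex.ofReal_mul,
      ← Real.mul_rpow (by positivity) (by positivity),
      show π / t * (π / (π ^ 2 / t)) = 1 by field_simp, Real.one_rpow, Complex.ofReal_one]
  rw [Real.fourier_eq] at gaussian
  calc ∫ y, (heatKernel t y : ℂ) * 𝐞 (-inner ℝ y ξ)
      = (((π / t) ^ ((Module.finrank ℝ V : ℝ) / 2) : ℝ) : ℂ) *
          ∫ y, 𝐞 (-inner ℝ y ξ) • Complex.exp (-((π ^ 2 / t : ℝ) : ℂ) * (‖y‖ : ℂ) ^ 2) := by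
        rw [← integral_const_mul]
        refine integral_congr_ae (.of_forall fun y => ?_)
        simp only [heatKernel, Circle.smul_def, smul_eq_mul]
        push_cast
        ring
    _ = Complex.exp (-(π : ℂ) ^ 2 * (‖ξ‖ : ℂ) ^ 2 / ((π ^ 2 / t : ℝ) : ℂ)) := by
        rw [gaussian, ← mul_assoc, constants, one_mul]
    _ = Real.exp (-t * ‖ξ‖ ^ 2) := by
        rw [Complex.ofReal_exp]
        congr 1
        push_cast
        have : (π : ℂ) ≠ 0 := Complex.ofReal_ne_zero.2 Real.pi_ne_zero
        have : (t : ℂ) ≠ 0 := Complex.ofReal_ne_zero.2 ht.ne'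
        field_simp

lemma lintegral_norm_rpow_mul_heatKernel_le {t θ : ℝ} (ht : 0 < t) (hθ : 0 ≤ θ) (hθ2 : θ ≤ 2) :
    ∫⁻ y : V, ENNReal.ofReal (‖y‖ ^ θ) * ‖heatKernel t y‖ₑ ≤
      ENNReal.ofReal (t ^ (θ / 2) * 2 ^ ((Module.finrank ℝ V : ℝ) / 2)) := by
  calc ∫⁻ y : V, ENNReal.ofReal (‖y‖ ^ θ) * ‖heatKernel t y‖ₑ
      ≤ ∫⁻ y : V, ENNReal.ofReal (t ^ (θ / 2) * 2 ^ ((Module.finrank ℝ V : ℝ) / 2)) *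
          ‖heatKernel (2 * t) y‖ₑ := by
        refine lintegral_mono fun y => ?_
        rw [Real.enorm_of_nonneg (heatKernel_nonneg ht y),
          Real.enorm_of_nonneg (heatKernel_nonneg (by positivity) y),
          ← ENNReal.ofReal_mul (by positivity), ← ENNReal.ofReal_mul (by positivity)]
        exact ENNReal.ofReal_le_ofReal (norm_rpow_mul_heatKernel_le ht hθ hθ2 y)
    _ = ENNReal.ofReal (t ^ (θ / 2) * 2 ^ ((Module.finrank ℝ V : ℝ) / 2)) := by
        rw [lintegral_const_mul _ (by fun_prop), lintegral_enorm_heatKernel (by positivity),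
          mul_one]

lemma lintegral_heatKernel_add {t : ℝ} (ht : 0 < t) (y : V) :
    ∫⁻ z : V, (‖heatKernel t z‖ₑ + ‖heatKernel t (z - y)‖ₑ) = 2 := by
  rw [lintegral_add_left (by fun_prop), lintegral_sub_right_eq_self (fun z => ‖heatKernel t z‖ₑ) y,
    lintegral_enorm_heatKernel ht, one_add_one_eq_two]

lemma lintegral_heatKernel_sub_le_two {t : ℝ} (ht : 0 < t) (y : V) :
    ∫⁻ z : V, ‖heatKernel t z - heatKernel t (z - y)‖ₑ ≤ 2 := by
  rw [← lintegral_heatKernel_add ht y]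
  exact lintegral_mono fun z => enorm_sub_le

lemma lintegral_heatKernel_sub_le_div_sqrt {t : ℝ} (ht : 0 < t) (y : V) :
    ∫⁻ z : V, ‖heatKernel t z - heatKernel t (z - y)‖ₑ ≤
      ENNReal.ofReal (4 * π * 2 ^ ((Module.finrank ℝ V : ℝ) / 2) * (‖y‖ / √t)) := by
  calc ∫⁻ z : V, ‖heatKernel t z - heatKernel t (z - y)‖ₑ
      ≤ ∫⁻ z : V, ENNReal.ofReal (2 * π * 2 ^ ((Module.finrank ℝ V : ℝ) / 2) * (‖y‖ / √t)) *
          (‖heatKernel (2 * t) z‖ₑ + ‖heatKernel (2 * t) (z - y)‖ₑ) := by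
        gcongr with z
        rw [Real.enorm_eq_ofReal_abs, Real.enorm_of_nonneg (heatKernel_nonneg (by positivity) _),
          Real.enorm_of_nonneg (heatKernel_nonneg (by positivity) _),
          ← ENNReal.ofReal_add (heatKernel_nonneg (by positivity) _)
            (heatKernel_nonneg (by positivity) _), ← ENNReal.ofReal_mul (by positivity)]
        exact ENNReal.ofReal_le_ofReal (abs_heatKernel_sub_le ht y z)
    _ = ENNReal.ofReal (4 * π * 2 ^ ((Module.finrank ℝ V : ℝ) / 2) * (‖y‖ / √t)) := by
        rw [lintegral_const_mul _ (by fun_prop), lintegral_heatKernel_add (by positivity),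
          ← ENNReal.ofReal_ofNat 2, ← ENNReal.ofReal_mul (by positivity)]
        ring_nf

lemma lintegral_heatKernel_sub_le {σ t : ℝ} (hσ : 0 ≤ σ) (hσ1 : σ ≤ 1) (ht : 0 < t) (y : V) :
    ∫⁻ z : V, ‖heatKernel t z - heatKernel t (z - y)‖ₑ ≤
      ENNReal.ofReal (4 * π * 2 ^ ((Module.finrank ℝ V : ℝ) / 2)) * ENNReal.ofReal (‖y‖ ^ σ) *
        ENNReal.ofReal (t ^ (-(σ / 2))) := by
  set D : ℝ := 4 * π * 2 ^ ((Module.finrank ℝ V : ℝ) / 2)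
  have two_le : 2 ≤ D := by
    have : (1 : ℝ) ≤ 2 ^ ((Module.finrank ℝ V : ℝ) / 2) :=
      Real.one_le_rpow one_le_two (by positivity)
    nlinarith [Real.pi_gt_three]
  have rescale : ‖y‖ ^ σ * t ^ (-(σ / 2)) = (‖y‖ / √t) ^ σ := by
    rw [Real.div_rpow (norm_nonneg y) (Real.sqrt_nonneg t), Real.sqrt_eq_rpow,
      ← Real.rpow_mul ht.le, Real.rpow_neg ht.le,
      show 1 / 2 * σ = σ / 2 by ring, ← div_eq_mul_inv]
  rw [mul_assoc, ← ENNReal.ofReal_mul (by positivity), rescale,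
    ← ENNReal.ofReal_mul (by positivity)]
  have ratio_nonneg : 0 ≤ ‖y‖ / √t := by positivity
  rcases le_total (‖y‖ / √t) 1 with small | large
  · refine (lintegral_heatKernel_sub_le_div_sqrt ht y).trans (ENNReal.ofReal_le_ofReal ?_)
    gcongr
    exact Real.self_le_rpow_of_le_one ratio_nonneg small hσ1
  · refine (lintegral_heatKernel_sub_le_two ht y).trans ?_
    rw [← ENNReal.ofReal_ofNat 2]
    refine ENNReal.ofReal_le_ofReal (two_le.trans (le_mul_of_one_le_right (by positivity) ?_))
    exact Real.one_le_rpow large hσ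

end HeatKernel

lemma enorm_ofReal (r : ℝ) : ‖(r : ℂ)‖ₑ = ‖r‖ₑ :=
  enorm_eq_iff_norm_eq.2 (Complex.norm_real r)

section HeatSemigroup

variable [FiniteDimensional ℝ V] [MeasurableSpace V] [BorelSpace V]

/-- The heat semigroup `exp (-t * normalizedLaplacian) f` at the point `x`. -/
def heatSemigroup (f : 𝓢(V, ℂ)) (t : ℝ) (x : V) : ℂ :=
  ∫ ξ, 𝐞 (inner ℝ ξ x) * ((Real.exp (-t * ‖ξ‖ ^ 2) : ℂ) * 𝓕 f ξ)

lemma measurable_uncurry_heatSemigroup (f : 𝓢(V, ℂ)) :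
    Measurable (Function.uncurry (heatSemigroup f)) := by
  have continuous_integrand : Continuous fun q : (ℝ × V) × V =>
      (𝐞 (inner ℝ q.2 q.1.2) : ℂ) * ((Real.exp (-q.1.1 * ‖q.2‖ ^ 2) : ℂ) * 𝓕 f q.2) := by
    fun_prop
  exact (continuous_integrand.stronglyMeasurable.integral_prod_right' (ν := volume)).measurable

lemma heatSemigroup_eq_integral_heatKernel (f : 𝓢(V, ℂ)) {t : ℝ} (ht : 0 < t) (x : V) :
    heatSemigroup f t x = ∫ y, (heatKernel t y : ℂ) * f (x - y) := by
  have translate_inversion (y : V) : (heatKernel t y : ℂ) * f (x - y) =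
      ∫ ξ, (heatKernel t y : ℂ) * (𝐞 (inner ℝ ξ x) * (𝐞 (-inner ℝ y ξ) * 𝓕 f ξ)) := by
    rw [integral_const_mul]
    congr 1
    have inversion := schwartz_inversion (SchwartzMap.compSubConstCLM ℂ y f) x
    simp only [fourier_compSubConstCLM] at inversion
    exact inversion
  have integrable_integrand : Integrable (Function.uncurry fun (y ξ : V) =>
      (heatKernel t y : ℂ) * (𝐞 (inner ℝ ξ x) * (𝐞 (-inner ℝ y ξ) * 𝓕 f ξ))) := by
    refine ((integrable_heatKernel ht).ofReal.mul_prod (𝓕 f).integrable).mono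
      (Continuous.aestronglyMeasurable (by unfold Function.uncurry; fun_prop))
      (.of_forall fun p => ?_)
    simp only [Function.uncurry, norm_mul, Circle.norm_coe, one_mul]
    rfl
  simp_rw [translate_inversion]
  rw [integral_integral_swap integrable_integrand, heatSemigroup]
  refine integral_congr_ae (.of_forall fun ξ => ?_)
  simp only [← integral_heatKernel_mul_fourierChar ht, ← integral_mul_const, ← integral_const_mul]
  refine integral_congr_ae (.of_forall fun y => ?_)
  ring

lemma enorm_heatSemigroup_le (f : 𝓢(V, ℂ)) {t : ℝ} (ht : 0 < t) (x : V) :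
    ‖heatSemigroup f t x‖ₑ ≤ ((fun y => ‖heatKernel t y‖ₑ) ⋆ₗ fun y => ‖f y‖ₑ) x := by
  rw [heatSemigroup_eq_integral_heatKernel f ht]
  refine (enorm_integral_le_lintegral_enorm _).trans_eq (lintegral_congr fun y => ?_)
  simp only [enorm_mul, neg_add_eq_sub, enorm_ofReal]

lemma integrable_heatKernel_mul (f : 𝓢(V, ℂ)) {t : ℝ} (ht : 0 < t) (x : V) :
    Integrable fun y => (heatKernel t y : ℂ) * f (x - y) := by
  refine Integrable.bdd_mul (c := (π / t) ^ ((Module.finrank ℝ V : ℝ) / 2))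
    (f.integrable.comp_sub_left x) (Continuous.aestronglyMeasurable (by fun_prop))
    (.of_forall fun y => ?_)
  rw [Complex.norm_real, Real.norm_of_nonneg (heatKernel_nonneg ht y)]
  exact heatKernel_le ht y

lemma heatSemigroup_difference (y : V) (f : 𝓢(V, ℂ)) {t : ℝ} (ht : 0 < t) (x : V) :
    heatSemigroup (difference y f) t x =
      ∫ z, ((heatKernel t z - heatKernel t (z - y) : ℝ) : ℂ) * f (x - z) := by
  have shifted_argument (z : V) : x - y - (z - y) = x - z := by abel
  have translated := (integrable_heatKernel_mul f ht (x - y)).comp_sub_right y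
  have translated_integral :=
    integral_sub_right_eq_self (fun z => (heatKernel t z : ℂ) * f (x - y - z)) y (μ := volume)
  simp only [shifted_argument] at translated translated_integral
  calc heatSemigroup (difference y f) t x
      = ∫ z, ((heatKernel t z : ℂ) * f (x - z) - (heatKernel t z : ℂ) * f (x - y - z)) := by
        simp only [heatSemigroup_eq_integral_heatKernel _ ht, difference_apply, mul_sub,
          sub_right_comm x y]
    _ = (∫ z, (heatKernel t z : ℂ) * f (x - z)) -
          ∫ z, (heatKernel t (z - y) : ℂ) * f (x - z) := by
        rw [integral_sub (integrable_heatKernel_mul f ht x)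
          (integrable_heatKernel_mul f ht (x - y)), translated_integral]
    _ = _ := by
        simp only [← integral_sub (integrable_heatKernel_mul f ht x) translated,
          Complex.ofReal_sub, sub_mul]

lemma enorm_heatSemigroup_difference_le (f : 𝓢(V, ℂ)) {t : ℝ} (ht : 0 < t) (y x : V) :
    ‖heatSemigroup (difference y f) t x‖ₑ ≤
      ((fun z => ‖heatKernel t z - heatKernel t (z - y)‖ₑ) ⋆ₗ fun z => ‖f z‖ₑ) x := by
  rw [heatSemigroup_difference y f ht]
  refine (enorm_integral_le_lintegral_enorm _).trans_eq (lintegral_congr fun z => ?_)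
  simp only [enorm_mul, neg_add_eq_sub, enorm_ofReal]

lemma eLpNorm'_heatSemigroup_le_rpow_mul {q r t : ℝ} (hq : 1 ≤ q) (hqr : q ≤ r) (ht : 0 < t)
    (f : 𝓢(V, ℂ)) :
    eLpNorm' (heatSemigroup f t) r volume ≤
      ENNReal.ofReal ((π / t) ^ ((Module.finrank ℝ V : ℝ) / 2)) ^ (1 / q - 1 / r) *
        eLpNorm' f q volume := by
  have kernel_le (y : V) : ‖heatKernel t y‖ₑ ≤
      ENNReal.ofReal ((π / t) ^ ((Module.finrank ℝ V : ℝ) / 2)) := by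
    rw [Real.enorm_of_nonneg (heatKernel_nonneg ht y)]
    exact ENNReal.ofReal_le_ofReal (heatKernel_le ht y)
  have young := eLpNorm'_lconvolution_le_of_le (ρ := volume) hq hqr (by fun_prop) (by fun_prop)
    kernel_le (F := fun y => ‖f y‖ₑ)
  rw [lintegral_enorm_heatKernel ht, ENNReal.one_rpow, one_mul, eLpNorm'_enorm] at young
  exact (eLpNorm'_mono_enorm_ae (by linarith)
    (.of_forall fun x => enorm_heatSemigroup_le f ht x)).trans young

lemma eLpNorm'_heatSemigroup_le {q t : ℝ} (hq : 1 ≤ q) (ht : 0 < t) (f : 𝓢(V, ℂ)) :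
    eLpNorm' (heatSemigroup f t) q volume ≤ eLpNorm' f q volume := by
  simpa only [sub_self, ENNReal.rpow_zero, one_mul] using
    eLpNorm'_heatSemigroup_le_rpow_mul hq le_rfl ht f

lemma eLpNorm'_heatSemigroup_difference_le {q t : ℝ} (hq : 1 ≤ q) (ht : 0 < t) (y : V)
    (f : 𝓢(V, ℂ)) :
    eLpNorm' (heatSemigroup (difference y f) t) q volume ≤
      (∫⁻ z : V, ‖heatKernel t z - heatKernel t (z - y)‖ₑ) * eLpNorm' f q volume := by
  have young := eLpNorm'_lconvolution_le (ρ := volume) hq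
    (K := fun z => ‖heatKernel t z - heatKernel t (z - y)‖ₑ) (F := fun y => ‖f y‖ₑ)
    (by fun_prop) (by fun_prop)
  rw [eLpNorm'_enorm] at young
  exact (eLpNorm'_mono_enorm_ae (by linarith)
    (.of_forall fun x => enorm_heatSemigroup_difference_le f ht y x)).trans young

end HeatSemigroup

section NegativeOrder

/-- The weight `t ^ (γ / 2 - 1) * exp (-t) / Γ (γ / 2)`, whose Laplace transform at `‖ξ‖ ^ 2` is
the symbol of the Bessel potential of order `-γ` when `0 < γ`. It is used for `-2 < γ < 0` too,
where it is a negative, non-integrable weight. -/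
def gammaWeight (γ t : ℝ) : ℝ := (Real.Gamma (γ / 2))⁻¹ * (Real.exp (-t) * t ^ (γ / 2 - 1))

@[fun_prop]
lemma measurable_gammaWeight (γ : ℝ) : Measurable (gammaWeight γ) := by
  unfold gammaWeight
  fun_prop

lemma integrableOn_gammaWeight {γ : ℝ} (hγ : 0 < γ) :
    IntegrableOn (gammaWeight γ) (Set.Ioi 0) :=
  (Real.GammaIntegral_convergent (by positivity)).const_mul _

lemma integral_gammaWeight_mul_exp {γ : ℝ} (hγ : 0 < γ) {x : ℝ} (hx : -1 < x) :
    ∫ t in Set.Ioi (0 : ℝ), gammaWeight γ t * Real.exp (-t * x) = (1 + x) ^ (-γ / 2) := by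
  have one_add_pos : 0 < 1 + x := by linarith
  calc ∫ t in Set.Ioi (0 : ℝ), gammaWeight γ t * Real.exp (-t * x)
      = (Real.Gamma (γ / 2))⁻¹ *
          ∫ t in Set.Ioi (0 : ℝ), t ^ (γ / 2 - 1) * Real.exp (-((1 + x) * t)) := by
        rw [← integral_const_mul]
        refine integral_congr_ae (.of_forall fun t => ?_)
        simp only [gammaWeight]
        rw [show -((1 + x) * t) = -t + -t * x by ring, Real.exp_add]
        ring
    _ = (1 + x) ^ (-γ / 2) := by
        rw [Real.integral_rpow_mul_exp_neg_mul_Ioi (half_pos hγ) one_add_pos, neg_div,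
          Real.rpow_neg one_add_pos.le, one_div, Real.inv_rpow one_add_pos.le]
        field_simp

lemma besselSymbol_neg_eq_integral {E : Type*} [NormedAddCommGroup E] {γ : ℝ} (hγ : 0 < γ)
    (ξ : E) :
    besselSymbol (-γ) ξ = ∫ t in Set.Ioi (0 : ℝ), gammaWeight γ t * Real.exp (-t * ‖ξ‖ ^ 2) :=
  (integral_gammaWeight_mul_exp hγ (neg_one_lt_zero.trans_le (by positivity))).symm

lemma lintegral_gammaWeight_mul_rpow_ne_top {γ τ : ℝ} (hτ : τ < γ / 2) :
    ∫⁻ t in Set.Ioi (0 : ℝ), ‖gammaWeight γ t‖ₑ * ENNReal.ofReal (t ^ (-τ)) ≠ ⊤ := by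
  have integrable := (Real.GammaIntegral_convergent (sub_pos.2 hτ)).const_mul (Real.Gamma (γ / 2))⁻¹
  refine ne_of_lt (Eq.trans_lt ?_ integrable.hasFiniteIntegral)
  refine setLIntegral_congr_fun measurableSet_Ioi fun t (ht : 0 < t) => ?_
  rw [← Real.enorm_of_nonneg (by positivity), ← enorm_mul, gammaWeight,
    show γ / 2 - τ - 1 = (γ / 2 - 1) + (-τ) by ring]
  simp only [Real.rpow_add ht]
  ring_nf

variable [FiniteDimensional ℝ V] [MeasurableSpace V] [BorelSpace V]

lemma bessel_neg_apply {γ : ℝ} (hγ : 0 < γ) (f : 𝓢(V, ℂ)) (x : V) :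
    bessel (-γ) f x = ∫ t in Set.Ioi (0 : ℝ), (gammaWeight γ t : ℂ) * heatSemigroup f t x := by
  have integrable_integrand : Integrable (Function.uncurry fun (t : ℝ) (ξ : V) =>
      (gammaWeight γ t : ℂ) * (𝐞 (inner ℝ ξ x) * ((Real.exp (-t * ‖ξ‖ ^ 2) : ℂ) * 𝓕 f ξ)))
      ((volume.restrict (Set.Ioi 0)).prod volume) := by
    refine ((integrableOn_gammaWeight hγ).ofReal.mul_prod (𝓕 f).integrable).mono
      (Measurable.aestronglyMeasurable (by unfold Function.uncurry; fun_prop)) ?_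
    rw [← Measure.restrict_univ (μ := (volume : Measure V)), Measure.prod_restrict]
    refine (ae_restrict_mem (measurableSet_Ioi.prod .univ)).mono ?_
    rintro ⟨t, ξ⟩ ⟨ht, -⟩
    have exp_le_one : Real.exp (-t * ‖ξ‖ ^ 2) ≤ 1 := by
      have : 0 < t := ht
      rw [Real.exp_le_one_iff, neg_mul, neg_nonpos]
      positivity
    simp only [Function.uncurry, norm_mul, Circle.norm_coe, one_mul, Complex.norm_real,
      Real.norm_of_nonneg (Real.exp_pos _).le]
    gcongr
    · exact (Complex.norm_real _).ge
    · exact mul_le_of_le_one_left (norm_nonneg (𝓕 f ξ)) exp_le_one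
  unfold heatSemigroup
  simp_rw [← integral_const_mul]
  rw [integral_integral_swap integrable_integrand, bessel_apply]
  refine integral_congr_ae (.of_forall fun ξ => ?_)
  simp only [besselSymbol_neg_eq_integral hγ, ← integral_complex_ofReal, ← integral_mul_const,
    ← integral_const_mul]
  refine integral_congr_ae (.of_forall fun t => ?_)
  simp only [Complex.ofReal_mul]
  ring

lemma schwartz_eLpNorm'_ne_top {r : ℝ} (hr : 0 < r) (f : 𝓢(V, ℂ)) : eLpNorm' f r volume ≠ ⊤ := by
  have memLp := f.memLp (ENNReal.ofReal r) volume
  have finite := memLp.eLpNorm_lt_top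
  rw [eLpNorm_eq_eLpNorm' (by simpa using hr) ENNReal.ofReal_ne_top,
    ENNReal.toReal_ofReal hr.le] at finite
  exact finite.ne

lemma eLpNorm'_bessel_neg_le {γ r : ℝ} (hγ : 0 < γ) (hr : 1 ≤ r) {f : 𝓢(V, ℂ)} {τ : ℝ} {M : ℝ≥0∞}
    (hM : ∀ t : ℝ, 0 < t →
      eLpNorm' (heatSemigroup f t) r volume ≤ M * ENNReal.ofReal (t ^ (-τ))) :
    eLpNorm' (bessel (-γ) f) r volume ≤
      (∫⁻ t in Set.Ioi (0 : ℝ), ‖gammaWeight γ t‖ₑ * ENNReal.ofReal (t ^ (-τ))) * M := by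
  have subordination (x : V) : ‖bessel (-γ) f x‖ₑ ≤
      ∫⁻ t in Set.Ioi (0 : ℝ), ‖gammaWeight γ t‖ₑ * ‖heatSemigroup f t x‖ₑ := by
    rw [bessel_neg_apply hγ]
    refine (enorm_integral_le_lintegral_enorm _).trans_eq (lintegral_congr fun t => ?_)
    rw [enorm_mul, enorm_ofReal]
  calc eLpNorm' (bessel (-γ) f) r volume
      ≤ ∫⁻ t in Set.Ioi (0 : ℝ),
          ‖gammaWeight γ t‖ₑ * eLpNorm' (heatSemigroup f t) r volume :=
        eLpNorm'_le_lintegral_mul_eLpNorm' hr (bessel (-γ) f).continuous.measurable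
          (schwartz_eLpNorm'_ne_top (by linarith) _) (by fun_prop)
          (measurable_uncurry_heatSemigroup f) subordination
    _ ≤ ∫⁻ t in Set.Ioi (0 : ℝ), ‖gammaWeight γ t‖ₑ * ENNReal.ofReal (t ^ (-τ)) * M := by
        refine setLIntegral_mono (by fun_prop) fun t ht => ?_
        rw [mul_assoc, mul_comm _ M]
        gcongr
        exact hM t ht
    _ = _ := lintegral_mul_const _ (by fun_prop)

lemma exists_eLpNorm'_bessel_neg_le {γ q r : ℝ} (hγ : 0 < γ) (hq : 1 ≤ q) (hqr : q ≤ r)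
    (h : (Module.finrank ℝ V : ℝ) * (1 / q - 1 / r) < γ) :
    ∃ C : ℝ≥0∞, C ≠ ⊤ ∧ ∀ f : 𝓢(V, ℂ),
      eLpNorm' (bessel (-γ) f) r volume ≤ C * eLpNorm' f q volume := by
  set δ := 1 / q - 1 / r
  set m := (Module.finrank ℝ V : ℝ) / 2 * δ
  have hδ : 0 ≤ δ := sub_nonneg.2 (one_div_le_one_div_of_le (by linarith) hqr)
  have weight_finite := lintegral_gammaWeight_mul_rpow_ne_top (γ := γ) (τ := m)
    (by simp only [m]; linarith)
  refine ⟨_, ENNReal.mul_ne_top weight_finite (ENNReal.ofReal_ne_top (r := π ^ m)), fun f => ?_⟩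
  rw [mul_assoc]
  refine eLpNorm'_bessel_neg_le hγ (hq.trans hqr) fun t ht => ?_
  refine (eLpNorm'_heatSemigroup_le_rpow_mul hq hqr ht f).trans_eq ?_
  rw [ENNReal.ofReal_rpow_of_nonneg (by positivity) hδ, ← Real.rpow_mul (by positivity),
    Real.div_rpow Real.pi_pos.le ht.le, Real.rpow_neg ht.le, div_eq_mul_inv,
    ENNReal.ofReal_mul (by positivity)]
  ring

lemma exists_eLpNorm'_bessel_neg_difference_le {γ σ q : ℝ} (hσ : 0 ≤ σ) (hσ1 : σ ≤ 1)
    (hσγ : σ < γ) (hq : 1 ≤ q) :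
    ∃ C : ℝ≥0∞, C ≠ ⊤ ∧ ∀ (f : 𝓢(V, ℂ)) (y : V),
      eLpNorm' (bessel (-γ) (difference y f)) q volume ≤
        C * ENNReal.ofReal (‖y‖ ^ σ) * eLpNorm' f q volume := by
  have hγ : 0 < γ := by linarith
  have weight_finite := lintegral_gammaWeight_mul_rpow_ne_top (γ := γ) (τ := σ / 2) (by linarith)
  refine ⟨_, ENNReal.mul_ne_top weight_finite (ENNReal.ofReal_ne_top
    (r := 4 * π * 2 ^ ((Module.finrank ℝ V : ℝ) / 2))), fun f y => ?_⟩
  rw [mul_assoc, mul_assoc]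
  refine eLpNorm'_bessel_neg_le hγ hq fun t ht => ?_
  calc eLpNorm' (heatSemigroup (difference y f) t) q volume
      ≤ (∫⁻ z : V, ‖heatKernel t z - heatKernel t (z - y)‖ₑ) * eLpNorm' f q volume :=
        eLpNorm'_heatSemigroup_difference_le hq ht y f
    _ ≤ (ENNReal.ofReal (4 * π * 2 ^ ((Module.finrank ℝ V : ℝ) / 2)) *
          ENNReal.ofReal (‖y‖ ^ σ) * ENNReal.ofReal (t ^ (-(σ / 2)))) * eLpNorm' f q volume := by
        gcongr
        exact lintegral_heatKernel_sub_le hσ hσ1 ht y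
    _ = _ := by ring

end NegativeOrder

section LevyKhinchin

lemma half_mul_gammaWeight_two_sub {β t : ℝ} (hβ : β ≠ 0) (ht : 0 < t) :
    β / 2 * gammaWeight (2 - β) t = -(t * gammaWeight (-β) t) := by
  have Gamma_recursion : Real.Gamma ((2 - β) / 2) = -β / 2 * Real.Gamma (-β / 2) := by
    rw [← Real.Gamma_add_one (div_ne_zero (neg_ne_zero.2 hβ) two_ne_zero)]
    ring_nf
  have power : t ^ ((2 - β) / 2 - 1) = t * t ^ (-β / 2 - 1) := by
    rw [← Real.rpow_one_add' ht.le (by ring_nf; simpa using hβ)]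
    ring_nf
  rw [gammaWeight, gammaWeight, Gamma_recursion, power, mul_inv]
  field_simp

lemma gammaWeight_neg_nonpos {β t : ℝ} (hβ : 0 < β) (hβ2 : β < 2) (ht : 0 < t) :
    gammaWeight (-β) t ≤ 0 := by
  have recursion := half_mul_gammaWeight_two_sub hβ.ne' ht
  have nonneg : 0 ≤ gammaWeight (2 - β) t := by
    have := Real.Gamma_pos_of_pos (half_pos (sub_pos.2 hβ2))
    unfold gammaWeight
    positivity
  have : 0 ≤ t * -gammaWeight (-β) t := by
    rw [mul_neg, ← recursion]
    positivity
  exact neg_nonneg.1 (nonneg_of_mul_nonneg_right this ht)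

lemma mul_integral_exp_neg_mul (t x : ℝ) :
    t * ∫ z in (0 : ℝ)..x, Real.exp (-t * z) = 1 - Real.exp (-t * x) := by
  have substitution := intervalIntegral.mul_integral_comp_mul_left (f := Real.exp) (a := 0)
    (b := x) (c := -t)
  rw [integral_exp, mul_zero, Real.exp_zero] at substitution
  linarith

lemma one_add_rpow_sub_one_eq_integral (b : ℝ) {x : ℝ} (hx : 0 ≤ x) :
    (1 + x) ^ b - 1 = ∫ z in (0 : ℝ)..x, b * (1 + z) ^ (b - 1) := by
  have one_add_ne_zero : ∀ z ∈ Set.uIcc 0 x, 1 + z ≠ 0 := fun z hz => by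
    rw [Set.uIcc_of_le hx] at hz
    linarith [hz.1]
  rw [intervalIntegral.integral_eq_sub_of_hasDerivAt (f := fun z => (1 + z) ^ b)]
  · simp only [add_zero, Real.one_rpow]
  · intro z hz
    simpa only [one_mul, id_eq] using
      ((hasDerivAt_id z).const_add 1).rpow_const (p := b) (Or.inl (one_add_ne_zero z hz))
  · exact (ContinuousOn.rpow_const (by fun_prop) fun z hz =>
      Or.inl (one_add_ne_zero z hz)).const_mul b |>.intervalIntegrable

lemma integrable_gammaWeight_mul_exp {γ : ℝ} (hγ : 0 < γ) (x : ℝ) :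
    Integrable (Function.uncurry fun z t : ℝ => gammaWeight γ t * Real.exp (-t * z))
      ((volume.restrict (Set.Ioc 0 x)).prod (volume.restrict (Set.Ioi 0))) := by
  have one_integrable : IntegrableOn (fun _ : ℝ => (1 : ℝ)) (Set.Ioc 0 x) := by simp
  refine (one_integrable.mul_prod (integrableOn_gammaWeight hγ)).mono
    (Measurable.aestronglyMeasurable (by unfold Function.uncurry; fun_prop)) ?_
  rw [Measure.prod_restrict]
  refine (ae_restrict_mem (measurableSet_Ioc.prod measurableSet_Ioi)).mono ?_
  rintro ⟨z, t⟩ ⟨⟨hz, -⟩, ht⟩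
  simp only [Function.uncurry, one_mul, norm_mul, Real.norm_of_nonneg (Real.exp_pos _).le]
  refine mul_le_of_le_one_right (norm_nonneg _) (Real.exp_le_one_iff.2 ?_)
  rw [neg_mul, neg_nonpos]
  exact (mul_pos ht hz).le

lemma integral_gammaWeight_neg_mul_exp_sub_one {β x : ℝ} (hβ : 0 < β) (hβ2 : β < 2)
    (hx : 0 ≤ x) :
    ∫ t in Set.Ioi (0 : ℝ), gammaWeight (-β) t * (Real.exp (-t * x) - 1) =
      (1 + x) ^ (β / 2) - 1 := by
  calc ∫ t in Set.Ioi (0 : ℝ), gammaWeight (-β) t * (Real.exp (-t * x) - 1)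
      = ∫ t in Set.Ioi (0 : ℝ), ∫ z in Set.Ioc 0 x,
          β / 2 * (gammaWeight (2 - β) t * Real.exp (-t * z)) := by
        refine setIntegral_congr_fun measurableSet_Ioi fun t ht => ?_
        simp only [← mul_assoc, half_mul_gammaWeight_two_sub hβ.ne' ht, integral_const_mul]
        rw [← intervalIntegral.integral_of_le hx]
        linear_combination gammaWeight (-β) t * mul_integral_exp_neg_mul t x
    _ = ∫ z in Set.Ioc 0 x, ∫ t in Set.Ioi (0 : ℝ),
          β / 2 * (gammaWeight (2 - β) t * Real.exp (-t * z)) :=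
        (integral_integral_swap
          ((integrable_gammaWeight_mul_exp (sub_pos.2 hβ2) x).const_mul (β / 2))).symm
    _ = ∫ z in Set.Ioc 0 x, β / 2 * (1 + z) ^ (β / 2 - 1) := by
        refine setIntegral_congr_fun measurableSet_Ioc fun z hz => ?_
        simp only [integral_const_mul]
        rw [integral_gammaWeight_mul_exp (sub_pos.2 hβ2) (by linarith [hz.1])]
        ring_nf
    _ = (1 + x) ^ (β / 2) - 1 := by
        rw [one_add_rpow_sub_one_eq_integral _ hx, intervalIntegral.integral_of_le hx]

lemma norm_one_sub_fourierChar_inner_le (y ξ : V) :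
    ‖1 - (𝐞 (-inner ℝ y ξ) : ℂ)‖ ≤ 2 * π * (‖y‖ * ‖ξ‖) := by
  refine (norm_one_sub_fourierChar_le _).trans ?_
  rw [abs_neg]
  gcongr
  exact abs_real_inner_le_norm y ξ

variable [FiniteDimensional ℝ V] [MeasurableSpace V] [BorelSpace V]

/-- The Lévy measure of `(1 + normalizedLaplacian) ^ (β / 2) - 1` for `0 < β < 2`, obtained by
subordinating the heat kernel to the (negative) weight `gammaWeight (-β)`. -/
def levyMeasure (β : ℝ) : Measure V :=
  (((volume.restrict (Set.Ioi 0)).prod volume).withDensity fun q : ℝ × V =>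
    ‖gammaWeight (-β) q.1 * heatKernel q.1 q.2‖ₑ).map Prod.snd

instance (β : ℝ) : SFinite (levyMeasure β : Measure V) := by
  unfold levyMeasure
  infer_instance

lemma lintegral_levyMeasure (β : ℝ) {F : V → ℝ≥0∞} (hF : Measurable F) :
    ∫⁻ y, F y ∂levyMeasure β =
      ∫⁻ t in Set.Ioi (0 : ℝ), ‖gammaWeight (-β) t‖ₑ * ∫⁻ y : V, F y * ‖heatKernel t y‖ₑ := by
  have measurable_heatKernel := measurable_uncurry_heatKernel (V := V)
  unfold Function.uncurry at measurable_heatKernel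
  rw [levyMeasure, lintegral_map hF measurable_snd,
    lintegral_withDensity_eq_lintegral_mul _ (by fun_prop) (by fun_prop),
    lintegral_prod _ (by fun_prop)]
  refine lintegral_congr fun t => ?_
  rw [← lintegral_const_mul _ (by fun_prop)]
  refine lintegral_congr fun y => ?_
  simp only [Pi.mul_apply, enorm_mul]
  ring

lemma lintegral_norm_rpow_levyMeasure_ne_top {β θ : ℝ} (hβθ : β < θ) (hθ : 0 ≤ θ) (hθ2 : θ ≤ 2) :
    ∫⁻ y : V, ENNReal.ofReal (‖y‖ ^ θ) ∂levyMeasure β ≠ ⊤ := by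
  have weight_finite := lintegral_gammaWeight_mul_rpow_ne_top (γ := -β) (τ := -(θ / 2))
    (by linarith)
  rw [neg_neg] at weight_finite
  refine ne_top_of_le_ne_top (ENNReal.mul_ne_top weight_finite
    (ENNReal.ofReal_ne_top (r := 2 ^ ((Module.finrank ℝ V : ℝ) / 2)))) ?_
  rw [lintegral_levyMeasure β (by fun_prop), ← lintegral_mul_const _ (by fun_prop)]
  refine setLIntegral_mono (by fun_prop) fun t (ht : 0 < t) => ?_
  rw [mul_assoc, ← ENNReal.ofReal_mul (by positivity)]
  gcongr
  exact lintegral_norm_rpow_mul_heatKernel_le ht hθ hθ2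

lemma integrable_norm_rpow_levyMeasure {β θ : ℝ} (hβθ : β < θ) (hθ : 0 ≤ θ) (hθ2 : θ ≤ 2) :
    Integrable (fun y : V => ‖y‖ ^ θ) (levyMeasure β) := by
  refine ⟨Measurable.aestronglyMeasurable (by fun_prop), Eq.trans_lt (lintegral_congr fun y => ?_)
    (lintegral_norm_rpow_levyMeasure_ne_top hβθ hθ hθ2).lt_top⟩
  exact Real.enorm_of_nonneg (by positivity)

lemma integrable_one_sub_fourierChar_levyMeasure {β : ℝ} (hβ1 : β < 1) (ξ : V) :
    Integrable (fun y : V => 1 - (𝐞 (-inner ℝ y ξ) : ℂ)) (levyMeasure β) := by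
  refine ((integrable_norm_rpow_levyMeasure hβ1 zero_le_one one_le_two).const_mul
    (2 * π * ‖ξ‖)).mono' (Continuous.aestronglyMeasurable (by fun_prop)) (.of_forall fun y => ?_)
  rw [Real.rpow_one, mul_assoc, mul_comm ‖ξ‖]
  exact norm_one_sub_fourierChar_inner_le y ξ

lemma integral_levyMeasure {β : ℝ} (hβ : 0 < β) (hβ2 : β < 2) {F : V → ℂ} (hF : Continuous F)
    (hF_integrable : Integrable F (levyMeasure β)) :
    ∫ y, F y ∂levyMeasure β =
      -∫ t in Set.Ioi (0 : ℝ), (gammaWeight (-β) t : ℂ) * ∫ y : V, (heatKernel t y : ℂ) * F y := by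
  have measurable_heatKernel := measurable_uncurry_heatKernel (V := V)
  unfold Function.uncurry at measurable_heatKernel
  have measurable_density : Measurable fun q : ℝ × V =>
      ‖gammaWeight (-β) q.1 * heatKernel q.1 q.2‖ₑ := by fun_prop
  have density_lt_top : ∀ᵐ q : ℝ × V ∂(volume.restrict (Set.Ioi 0)).prod volume,
      ‖gammaWeight (-β) q.1 * heatKernel q.1 q.2‖ₑ < ⊤ := .of_forall fun q => enorm_lt_top
  rw [levyMeasure, integrable_map_measure hF.aestronglyMeasurable measurable_snd.aemeasurable,
    integrable_withDensity_iff_integrable_smul' measurable_density density_lt_top]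
    at hF_integrable
  simp only [Function.comp_apply] at hF_integrable
  rw [levyMeasure, integral_map measurable_snd.aemeasurable hF.aestronglyMeasurable,
    integral_withDensity_eq_integral_toReal_smul measurable_density density_lt_top,
    integral_prod _ hF_integrable, ← integral_neg]
  refine setIntegral_congr_fun measurableSet_Ioi fun t (ht : 0 < t) => ?_
  simp only [toReal_enorm, norm_mul, Real.norm_of_nonneg (heatKernel_nonneg ht _),
    Real.norm_of_nonpos (gammaWeight_neg_nonpos hβ hβ2 ht), ← integral_const_mul, ← integral_neg,
    Complex.real_smul, Complex.ofReal_mul, Complex.ofReal_neg]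
  refine integral_congr_ae (.of_forall fun y => ?_)
  ring

lemma integral_heatKernel_mul_one_sub_fourierChar {t : ℝ} (ht : 0 < t) (ξ : V) :
    ∫ y : V, (heatKernel t y : ℂ) * (1 - 𝐞 (-inner ℝ y ξ)) = 1 - Real.exp (-t * ‖ξ‖ ^ 2) := by
  have kernel_integrable : Integrable fun y : V => (heatKernel t y : ℂ) :=
    (integrable_heatKernel ht).ofReal
  have character_integrable :
      Integrable fun y : V => (heatKernel t y : ℂ) * 𝐞 (-inner ℝ y ξ) := by
    refine kernel_integrable.mono (Continuous.aestronglyMeasurable (by fun_prop))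
      (.of_forall fun y => ?_)
    rw [norm_mul, Circle.norm_coe, mul_one]
  have kernel_integral : ∫ y : V, (heatKernel t y : ℂ) = 1 := by
    rw [integral_complex_ofReal, integral_heatKernel ht, Complex.ofReal_one]
  rw [← integral_heatKernel_mul_fourierChar ht]
  simp only [mul_sub, mul_one]
  rw [integral_sub kernel_integrable character_integrable, kernel_integral]

lemma integral_one_sub_fourierChar_levyMeasure {β : ℝ} (hβ : 0 < β) (hβ1 : β < 1) (ξ : V) :
    ∫ y : V, (1 - (𝐞 (-inner ℝ y ξ) : ℂ)) ∂levyMeasure β = besselSymbol β ξ - 1 := by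
  have levy_khinchin := congrArg Complex.ofReal <|
    integral_gammaWeight_neg_mul_exp_sub_one hβ (by linarith) (sq_nonneg ‖ξ‖)
  rw [← integral_complex_ofReal, Complex.ofReal_sub, Complex.ofReal_one] at levy_khinchin
  rw [integral_levyMeasure hβ (by linarith) (by fun_prop)
    (integrable_one_sub_fourierChar_levyMeasure hβ1 ξ), besselSymbol, ← levy_khinchin,
    ← integral_neg]
  refine setIntegral_congr_fun measurableSet_Ioi fun t ht => ?_
  simp only [integral_heatKernel_mul_one_sub_fourierChar ht]
  push_cast
  ring

lemma integral_one_sub_fourierChar_mul_levyMeasure {β : ℝ} (hβ : 0 < β) (hβ1 : β < 1)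
    (ξ η : V) :
    ∫ y : V, (1 - (𝐞 (-inner ℝ y ξ) : ℂ)) * (1 - 𝐞 (-inner ℝ y η)) ∂levyMeasure β =
      (besselSymbol β ξ : ℂ) + besselSymbol β η - besselSymbol β (ξ + η) - 1 := by
  have polarization (y : V) : (1 - (𝐞 (-inner ℝ y ξ) : ℂ)) * (1 - 𝐞 (-inner ℝ y η)) =
      (1 - (𝐞 (-inner ℝ y ξ) : ℂ)) + (1 - 𝐞 (-inner ℝ y η)) - (1 - 𝐞 (-inner ℝ y (ξ + η))) := by
    rw [inner_add_right, neg_add, fourierChar_add]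
    ring
  have integrable := integrable_one_sub_fourierChar_levyMeasure (V := V) hβ1
  have integrable_add : Integrable
      (fun y : V => (1 - (𝐞 (-inner ℝ y ξ) : ℂ)) + (1 - 𝐞 (-inner ℝ y η))) (levyMeasure β) :=
    (integrable ξ).add (integrable η)
  rw [integral_congr_ae (.of_forall polarization), integral_sub integrable_add (integrable (ξ + η)),
    integral_add (integrable ξ) (integrable η)]
  simp only [integral_one_sub_fourierChar_levyMeasure hβ hβ1]
  ring

end LevyKhinchin

section LeibnizRule

variable [FiniteDimensional ℝ V] [MeasurableSpace V] [BorelSpace V]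

/-- The integrand of `bessel e (schwartzMul u v) x` as a double Fourier integral over the
frequencies `p = (ξ, η)` of the two factors. -/
def productIntegrand (e : ℝ) (u v : 𝓢(V, ℂ)) (x : V) (p : V × V) : ℂ :=
  𝐞 (inner ℝ (p.1 + p.2) x) * ((besselSymbol e (p.1 + p.2) : ℂ) * (𝓕 u p.1 * 𝓕 v p.2))

lemma continuous_productIntegrand (e : ℝ) (u v : 𝓢(V, ℂ)) :
    Continuous fun z : V × V × V => productIntegrand e u v z.1 z.2 := by
  have continuous_fourier_left := (𝓕 u).continuous
  have continuous_fourier_right := (𝓕 v).continuous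
  unfold productIntegrand
  fun_prop

lemma integrable_productIntegrand {e : ℝ} (he : 0 ≤ e) (u v : 𝓢(V, ℂ)) (x : V) :
    Integrable (productIntegrand e u v x) := by
  refine (((integrable_besselSymbol_mul_fourier e u).mul_prod
    (integrable_besselSymbol_mul_fourier e v)).norm.const_mul (2 ^ (e / 2))).mono'
    ((continuous_productIntegrand e u v).comp (by fun_prop : Continuous fun p : V × V =>
      (x, p))).aestronglyMeasurable (.of_forall fun p => ?_)
  simp only [productIntegrand, norm_mul, Circle.norm_coe, one_mul, Complex.norm_real,
    Real.norm_of_nonneg (besselSymbol_pos _ _).le]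
  calc besselSymbol e (p.1 + p.2) * (‖𝓕 u p.1‖ * ‖𝓕 v p.2‖)
      ≤ 2 ^ (e / 2) * (besselSymbol e p.1 * besselSymbol e p.2) *
          (‖𝓕 u p.1‖ * ‖𝓕 v p.2‖) := by
        gcongr
        exact besselSymbol_add_le he p.1 p.2
    _ = _ := by ring

lemma bessel_schwartzMul_apply {e : ℝ} (he : 0 ≤ e) (u v : 𝓢(V, ℂ)) (x : V) :
    bessel e (schwartzMul u v) x = ∫ p, productIntegrand e u v x p := by
  have shear := measurePreserving_prod_neg_add (volume : Measure V) (volume : Measure V)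
  have integrable_shear : Integrable (Function.uncurry fun ξ ζ : V =>
      productIntegrand e u v x (ξ, -ξ + ζ)) :=
    shear.integrable_comp_of_integrable (integrable_productIntegrand he u v x)
  calc bessel e (schwartzMul u v) x
      = ∫ ζ, ∫ ξ, productIntegrand e u v x (ξ, -ξ + ζ) := by
        rw [bessel_apply]
        refine integral_congr_ae (.of_forall fun ζ => ?_)
        simp only [productIntegrand, fourier_schwartzMul, neg_add_eq_sub, add_sub_cancel,
          integral_const_mul]
    _ = ∫ ξ, ∫ ζ, productIntegrand e u v x (ξ, -ξ + ζ) :=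
        (integral_integral_swap integrable_shear).symm
    _ = ∫ ξ, ∫ η, productIntegrand e u v x (ξ, η) :=
        integral_congr_ae (.of_forall fun ξ =>
          integral_add_left_eq_self (fun η => productIntegrand e u v x (ξ, η)) (-ξ))
    _ = _ := (integral_prod _ (integrable_productIntegrand he u v x)).symm

lemma productIntegrand_bessel_left (e β : ℝ) (u v : 𝓢(V, ℂ)) (x : V) (p : V × V) :
    productIntegrand e (bessel β u) v x p = besselSymbol β p.1 * productIntegrand e u v x p := by
  rw [productIntegrand, productIntegrand, fourier_bessel]
  ring

lemma productIntegrand_bessel_right (e β : ℝ) (u v : 𝓢(V, ℂ)) (x : V) (p : V × V) :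
    productIntegrand e u (bessel β v) x p = besselSymbol β p.2 * productIntegrand e u v x p := by
  rw [productIntegrand, productIntegrand, fourier_bessel]
  ring

lemma productIntegrand_add (e β : ℝ) (u v : 𝓢(V, ℂ)) (x : V) (p : V × V) :
    productIntegrand (e + β) u v x p =
      besselSymbol β (p.1 + p.2) * productIntegrand e u v x p := by
  rw [productIntegrand, productIntegrand, besselSymbol_add, Complex.ofReal_mul]
  ring

lemma productIntegrand_difference (e : ℝ) (y : V) (u v : 𝓢(V, ℂ)) (x : V) (p : V × V) :
    productIntegrand e (difference y u) (difference y v) x p =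
      (1 - 𝐞 (-inner ℝ y p.1)) * (1 - 𝐞 (-inner ℝ y p.2)) * productIntegrand e u v x p := by
  rw [productIntegrand, productIntegrand, fourier_difference, fourier_difference]
  ring

/-- The defect of `bessel β` from being a derivation on products, measured after applying
`bessel e`; the term `bessel e (schwartzMul u v)` makes it bilinear in differences. -/
def leibnizDefect (e β : ℝ) (u v : 𝓢(V, ℂ)) : 𝓢(V, ℂ) :=
  bessel e (schwartzMul u (bessel β v)) + bessel e (schwartzMul (bessel β u) v) -
    bessel e (schwartzMul u v) - bessel (e + β) (schwartzMul u v)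

lemma leibnizDefect_apply_eq_integral_symbol {e β : ℝ} (he : 0 ≤ e) (hβ : 0 ≤ β)
    (u v : 𝓢(V, ℂ)) (x : V) :
    leibnizDefect e β u v x = ∫ p : V × V, ((besselSymbol β p.1 : ℂ) + besselSymbol β p.2 -
      besselSymbol β (p.1 + p.2) - 1) * productIntegrand e u v x p := by
  have integrable_right := integrable_productIntegrand he u (bessel β v) x
  have integrable_left := integrable_productIntegrand he (bessel β u) v x
  have integrable_base := integrable_productIntegrand he u v x
  have integrable_top := integrable_productIntegrand (add_nonneg he hβ) u v x
  change bessel e (schwartzMul u (bessel β v)) x + bessel e (schwartzMul (bessel β u) v) x -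
    bessel e (schwartzMul u v) x - bessel (e + β) (schwartzMul u v) x = _
  rw [bessel_schwartzMul_apply he, bessel_schwartzMul_apply he, bessel_schwartzMul_apply he,
    bessel_schwartzMul_apply (add_nonneg he hβ), ← integral_add' integrable_right integrable_left,
    ← integral_sub' (integrable_right.add integrable_left) integrable_base,
    ← integral_sub' ((integrable_right.add integrable_left).sub integrable_base) integrable_top]
  refine integral_congr_ae (.of_forall fun p => ?_)
  simp only [Pi.add_apply, Pi.sub_apply, productIntegrand_bessel_left,
    productIntegrand_bessel_right, productIntegrand_add]
  ring

lemma norm_productIntegrand_difference_le (e : ℝ) (y : V) (u v : 𝓢(V, ℂ)) (x : V) (p : V × V) :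
    ‖productIntegrand e (difference y u) (difference y v) x p‖ ≤
      (2 * π) ^ 2 * (‖y‖ ^ (2 : ℝ) * ‖productIntegrand e (bessel 1 u) (bessel 1 v) x p‖) := by
  have one_sub_le (ξ : V) :
      ‖1 - (𝐞 (-inner ℝ y ξ) : ℂ)‖ ≤ 2 * π * (‖y‖ * besselSymbol 1 ξ) := by
    refine (norm_one_sub_fourierChar_inner_le y ξ).trans ?_
    gcongr
    simpa only [Real.rpow_one] using norm_rpow_le_besselSymbol zero_le_one ξ
  rw [productIntegrand_difference, productIntegrand_bessel_left, productIntegrand_bessel_right]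
  simp only [norm_mul, Complex.norm_real, Real.norm_of_nonneg (besselSymbol_pos _ _).le]
  calc ‖1 - (𝐞 (-inner ℝ y p.1) : ℂ)‖ * ‖1 - (𝐞 (-inner ℝ y p.2) : ℂ)‖ *
        ‖productIntegrand e u v x p‖
      ≤ 2 * π * (‖y‖ * besselSymbol 1 p.1) * (2 * π * (‖y‖ * besselSymbol 1 p.2)) *
          ‖productIntegrand e u v x p‖ := by
        gcongr
        · exact mul_nonneg Real.two_pi_pos.le
            (mul_nonneg (norm_nonneg y) (besselSymbol_pos 1 p.1).le)
        · exact one_sub_le p.1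
        · exact one_sub_le p.2
    _ = _ := by
        rw [Real.rpow_two]
        ring

lemma continuous_productIntegrand_difference (e : ℝ) (u v : 𝓢(V, ℂ)) :
    Continuous fun z : (V × V) × V × V =>
      productIntegrand e (difference z.1.1 u) (difference z.1.1 v) z.1.2 z.2 := by
  have continuous_base := (continuous_productIntegrand e u v).comp
    (by fun_prop : Continuous fun z : (V × V) × V × V => (z.1.2, z.2))
  simp only [productIntegrand_difference]
  exact Continuous.mul (by fun_prop) continuous_base

lemma integrable_productIntegrand_difference {e β : ℝ} (he : 0 ≤ e) (hβ2 : β < 2)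
    (u v : 𝓢(V, ℂ)) (x : V) :
    Integrable (fun z : V × V × V =>
      productIntegrand e (difference z.1 u) (difference z.1 v) x z.2)
      ((levyMeasure β).prod volume) :=
  (((integrable_norm_rpow_levyMeasure hβ2 zero_le_two le_rfl).mul_prod
    (integrable_productIntegrand he (bessel 1 u) (bessel 1 v) x).norm).const_mul
      ((2 * π) ^ 2)).mono' ((continuous_productIntegrand_difference e u v).comp
        (by fun_prop : Continuous fun z : V × V × V => ((z.1, x), z.2))).aestronglyMeasurable
    (.of_forall fun z => norm_productIntegrand_difference_le e z.1 u v x z.2)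

lemma leibnizDefect_apply {e β : ℝ} (he : 0 ≤ e) (hβ : 0 < β) (hβ1 : β < 1)
    (u v : 𝓢(V, ℂ)) (x : V) :
    leibnizDefect e β u v x =
      ∫ y, bessel e (schwartzMul (difference y u) (difference y v)) x ∂levyMeasure β := by
  simp only [bessel_schwartzMul_apply he]
  rw [leibnizDefect_apply_eq_integral_symbol he hβ.le, integral_integral_swap
    (integrable_productIntegrand_difference he (by linarith) u v x)]
  refine integral_congr_ae (.of_forall fun p => ?_)
  simp only [productIntegrand_difference, integral_mul_const,
    integral_one_sub_fourierChar_mul_levyMeasure hβ hβ1]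

lemma measurable_uncurry_bessel_schwartzMul_difference {e : ℝ} (he : 0 ≤ e) (u v : 𝓢(V, ℂ)) :
    Measurable (Function.uncurry fun y x : V =>
      bessel e (schwartzMul (difference y u) (difference y v)) x) := by
  simp only [Function.uncurry_def, bessel_schwartzMul_apply he]
  exact (continuous_productIntegrand_difference e u v).stronglyMeasurable.integral_prod_right'
    |>.measurable

lemma eLpNorm'_leibnizDefect_le {e β r : ℝ} (he : 0 ≤ e) (hβ : 0 < β) (hβ1 : β < 1)
    (hr : 1 ≤ r) (u v : 𝓢(V, ℂ)) :
    eLpNorm' (leibnizDefect e β u v) r volume ≤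
      ∫⁻ y, eLpNorm' (bessel e (schwartzMul (difference y u) (difference y v))) r volume
        ∂levyMeasure β := by
  have minkowski := eLpNorm'_le_lintegral_mul_eLpNorm' (ν := (levyMeasure β : Measure V)) hr
    (leibnizDefect e β u v).continuous.measurable (schwartz_eLpNorm'_ne_top (by linarith) _)
    (W := 1) measurable_one (measurable_uncurry_bessel_schwartzMul_difference he u v)
    fun x => by
      simp only [Pi.one_apply, one_mul, leibnizDefect_apply he hβ hβ1]
      exact enorm_integral_le_lintegral_enorm _
  simpa only [Pi.one_apply, one_mul] using minkowski

lemma eLpNorm'_schwartz_sub_le {r : ℝ} (hr : 1 ≤ r) (f g : 𝓢(V, ℂ)) :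
    eLpNorm' (f - g : 𝓢(V, ℂ)) r volume ≤ eLpNorm' f r volume + eLpNorm' g r volume := by
  have triangle := eLpNorm'_add_le (μ := volume) f.continuous.aestronglyMeasurable
    g.continuous.neg.aestronglyMeasurable hr
  rwa [eLpNorm'_neg, ← sub_eq_add_neg] at triangle

lemma eLpNorm'_bessel_add_schwartzMul_le {e β r : ℝ} (hr : 1 ≤ r) (u v : 𝓢(V, ℂ)) :
    eLpNorm' (bessel (e + β) (schwartzMul u v)) r volume ≤
      eLpNorm' (bessel e (schwartzMul u (bessel β v))) r volume +
        eLpNorm' (bessel e (schwartzMul (bessel β u) v)) r volume +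
        eLpNorm' (bessel e (schwartzMul u v)) r volume +
        eLpNorm' (leibnizDefect e β u v) r volume := by
  have decomposition : bessel (e + β) (schwartzMul u v) =
      bessel e (schwartzMul u (bessel β v)) + bessel e (schwartzMul (bessel β u) v) -
        bessel e (schwartzMul u v) - leibnizDefect e β u v := by
    unfold leibnizDefect
    abel
  rw [decomposition]
  refine (eLpNorm'_schwartz_sub_le hr _ _).trans (add_le_add_left ?_ _)
  refine (eLpNorm'_schwartz_sub_le hr _ _).trans (add_le_add_left ?_ _)
  exact eLpNorm'_add_le (SchwartzMap.continuous _).aestronglyMeasurable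
    (SchwartzMap.continuous _).aestronglyMeasurable hr

end LeibnizRule

section ProductEstimate

variable [FiniteDimensional ℝ V] [MeasurableSpace V] [BorelSpace V]

lemma eLpNorm'_schwartzMul_le {p q s : ℝ} (hp : 0 < p) (hq : 0 < q) (h : 1 / s = 1 / p + 1 / q)
    (u v : 𝓢(V, ℂ)) :
    eLpNorm' (schwartzMul u v) s volume ≤ eLpNorm' u p volume * eLpNorm' v q volume := by
  have one_div_lt : 1 / p < 1 / s := h ▸ lt_add_of_pos_right _ (one_div_pos.2 hq)
  have hs : 0 < s := one_div_pos.1 ((one_div_pos.2 hp).trans one_div_lt)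
  have mul_eq : ⇑(schwartzMul u v) = ⇑u • ⇑v := funext (schwartzMul_apply u v)
  rw [mul_eq]
  exact eLpNorm'_smul_le_mul_eLpNorm' v.continuous.aestronglyMeasurable
    u.continuous.aestronglyMeasurable hs ((one_div_lt_one_div hp hs).1 one_div_lt) h

lemma exists_eLpNorm'_le_bessel {a c g p : ℝ} (ha : 0 ≤ a) (hac : a ≤ c) (hp : 1 ≤ p)
    (hg : 0 ≤ g) (hgp : g < 1 / p) (hgc : Module.finrank ℝ V * g < c) :
    ∃ C : ℝ≥0∞, C ≠ ⊤ ∧ ∀ u : 𝓢(V, ℂ),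
      eLpNorm' u (1 / (1 / p - g * (a / c))) volume ≤ C * eLpNorm' (bessel a u) p volume := by
  have hc : 0 < c := lt_of_le_of_lt (by positivity) hgc
  rcases ha.eq_or_lt with rfl | ha
  · exact ⟨1, ENNReal.one_ne_top, fun u => by simp [bessel_zero]⟩
  have share_le : g * (a / c) ≤ g := mul_le_of_le_one_right hg ((div_le_one hc).2 hac)
  have share_nonneg : 0 ≤ g * (a / c) := by positivity
  have share_lt : Module.finrank ℝ V * (g * (a / c)) < a := by
    rw [← mul_assoc, ← mul_div_assoc, div_lt_iff₀ hc, mul_comm a]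
    gcongr
  have exponent_le : p ≤ 1 / (1 / p - g * (a / c)) := by
    rw [le_one_div (by linarith) (by linarith)]
    linarith
  obtain ⟨C, hC, sobolev⟩ := exists_eLpNorm'_bessel_neg_le (V := V) ha hp exponent_le
    (by rwa [one_div_one_div, sub_sub_cancel])
  refine ⟨C, hC, fun u => ?_⟩
  simpa only [bessel_bessel, neg_add_cancel, bessel_zero] using sobolev (bessel a u)

lemma exists_eLpNorm'_bessel_sub_difference_le {γ σ p : ℝ} (a : ℝ) (hσ : 0 ≤ σ) (hσ1 : σ ≤ 1)
    (hσγ : σ < γ) (hp : 1 ≤ p) :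
    ∃ C : ℝ≥0∞, C ≠ ⊤ ∧ ∀ (u : 𝓢(V, ℂ)) (y : V),
      eLpNorm' (bessel (a - γ) (difference y u)) p volume ≤
        C * ENNReal.ofReal (‖y‖ ^ σ) * eLpNorm' (bessel a u) p volume := by
  obtain ⟨C, hC, gain⟩ := exists_eLpNorm'_bessel_neg_difference_le (V := V) hσ hσ1 hσγ hp
  refine ⟨C, hC, fun u y => ?_⟩
  simpa only [← bessel_difference, bessel_bessel, neg_add_eq_sub] using gain (bessel a u) y

variable (V) in
/-- The product estimate `H^a_p · H^b_q ⊆ H^e_s` for Bessel potential spaces, on Schwartz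
functions. -/
def BesselProductBound (e a b p q s : ℝ) : Prop :=
  ∃ C : ℝ≥0∞, C ≠ ⊤ ∧ ∀ u v : 𝓢(V, ℂ),
    eLpNorm' (bessel e (schwartzMul u v)) s volume ≤
      C * eLpNorm' (bessel a u) p volume * eLpNorm' (bessel b v) q volume

lemma besselProductBound_zero {a b p q s : ℝ} (ha : 0 ≤ a) (hb : 0 ≤ b) (hp : 1 ≤ p)
    (hq : 1 ≤ q) (hg : 0 ≤ 1 / p + 1 / q - 1 / s) (hgp : 1 / p + 1 / q - 1 / s < 1 / p)
    (hgq : 1 / p + 1 / q - 1 / s < 1 / q)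
    (hgab : Module.finrank ℝ V * (1 / p + 1 / q - 1 / s) < a + b) :
    BesselProductBound V 0 a b p q s := by
  set g := 1 / p + 1 / q - 1 / s
  have hab : 0 < a + b := lt_of_le_of_lt (by positivity) hgab
  obtain ⟨C, hC, sobolev_left⟩ := exists_eLpNorm'_le_bessel (V := V) ha
    (le_add_of_nonneg_right hb) hp hg hgp hgab
  obtain ⟨D, hD, sobolev_right⟩ := exists_eLpNorm'_le_bessel (V := V) hb
    (le_add_of_nonneg_left ha) hq hg hgq hgab
  refine ⟨C * D, ENNReal.mul_ne_top hC hD, fun u v => ?_⟩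
  have left_le : g * (a / (a + b)) ≤ g :=
    mul_le_of_le_one_right hg ((div_le_one hab).2 (le_add_of_nonneg_right hb))
  have right_le : g * (b / (a + b)) ≤ g :=
    mul_le_of_le_one_right hg ((div_le_one hab).2 (le_add_of_nonneg_left ha))
  have shares : g * (a / (a + b)) + g * (b / (a + b)) = g := by field_simp
  rw [bessel_zero]
  calc eLpNorm' (schwartzMul u v) s volume
      ≤ eLpNorm' u (1 / (1 / p - g * (a / (a + b)))) volume *
          eLpNorm' v (1 / (1 / q - g * (b / (a + b)))) volume := by
        refine eLpNorm'_schwartzMul_le (one_div_pos.2 (by linarith)) (one_div_pos.2 (by linarith))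
          ?_ u v
        rw [one_div_one_div, one_div_one_div]
        linarith
    _ ≤ (C * eLpNorm' (bessel a u) p volume) * (D * eLpNorm' (bessel b v) q volume) :=
        mul_le_mul' (sobolev_left u) (sobolev_right v)
    _ = _ := by ring

lemma BesselProductBound.exists_eLpNorm'_leibnizDefect_le {e β γ a b p q s : ℝ} (he : 0 ≤ e)
    (hβ : 0 < β) (hβ1 : β < 1) (hγ : β / 2 < γ) (hp : 1 ≤ p) (hq : 1 ≤ q) (hs : 1 ≤ s)
    (h : BesselProductBound V e (a - γ) (b - γ) p q s) :
    ∃ C : ℝ≥0∞, C ≠ ⊤ ∧ ∀ u v : 𝓢(V, ℂ), eLpNorm' (leibnizDefect e β u v) s volume ≤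
      C * eLpNorm' (bessel a u) p volume * eLpNorm' (bessel b v) q volume := by
  obtain ⟨σ, hβσ, hσ⟩ := exists_between (lt_min hγ (by linarith : β / 2 < 1))
  obtain ⟨hσγ, hσ1⟩ := lt_min_iff.1 hσ
  obtain ⟨C, hC, product_bound⟩ := h
  obtain ⟨D, hD, gain_left⟩ := exists_eLpNorm'_bessel_sub_difference_le (V := V) a
    (by linarith) hσ1.le hσγ hp
  obtain ⟨E, hE, gain_right⟩ := exists_eLpNorm'_bessel_sub_difference_le (V := V) b
    (by linarith) hσ1.le hσγ hq
  have moment := lintegral_norm_rpow_levyMeasure_ne_top (V := V) (β := β) (θ := 2 * σ)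
    (by linarith) (by linarith) (by linarith)
  refine ⟨_, ENNReal.mul_ne_top moment (ENNReal.mul_ne_top (ENNReal.mul_ne_top hC hD) hE),
    fun u v => ?_⟩
  rw [mul_assoc, mul_assoc, ← lintegral_mul_const _ (by fun_prop)]
  refine (eLpNorm'_leibnizDefect_le he hβ hβ1 hs u v).trans (lintegral_mono fun y => ?_)
  have weight_mul : ENNReal.ofReal (‖y‖ ^ σ) * ENNReal.ofReal (‖y‖ ^ σ) =
      ENNReal.ofReal (‖y‖ ^ (2 * σ)) := by
    rw [← ENNReal.ofReal_mul (by positivity),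
      ← Real.rpow_add_of_nonneg (norm_nonneg y) (by linarith) (by linarith), two_mul]
  calc eLpNorm' (bessel e (schwartzMul (difference y u) (difference y v))) s volume
      ≤ C * eLpNorm' (bessel (a - γ) (difference y u)) p volume *
          eLpNorm' (bessel (b - γ) (difference y v)) q volume := product_bound _ _
    _ ≤ C * (D * ENNReal.ofReal (‖y‖ ^ σ) * eLpNorm' (bessel a u) p volume) *
          (E * ENNReal.ofReal (‖y‖ ^ σ) * eLpNorm' (bessel b v) q volume) := by
        gcongr
        · exact gain_left u y
        · exact gain_right v y
    _ = _ := by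
        rw [← weight_mul]
        ring

lemma BesselProductBound.add {e β γ a b p q s : ℝ} (he : 0 ≤ e) (hβ : 0 < β) (hβ1 : β < 1)
    (hγ : β / 2 < γ) (hp : 1 ≤ p) (hq : 1 ≤ q) (hs : 1 ≤ s)
    (right : BesselProductBound V e a (b - β) p q s)
    (left : BesselProductBound V e (a - β) b p q s)
    (base : BesselProductBound V e a b p q s)
    (differences : BesselProductBound V e (a - γ) (b - γ) p q s) :
    BesselProductBound V (e + β) a b p q s := by
  obtain ⟨C₁, hC₁, right_le⟩ := right
  obtain ⟨C₂, hC₂, left_le⟩ := left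
  obtain ⟨C₃, hC₃, base_le⟩ := base
  obtain ⟨C₄, hC₄, defect_le⟩ :=
    differences.exists_eLpNorm'_leibnizDefect_le he hβ hβ1 hγ hp hq hs
  refine ⟨C₁ + C₂ + C₃ + C₄, by finiteness, fun u v => ?_⟩
  have right_le := right_le u (bessel β v)
  have left_le := left_le (bessel β u) v
  rw [bessel_bessel, sub_add_cancel] at right_le left_le
  refine (eLpNorm'_bessel_add_schwartzMul_le hs u v).trans ?_
  simp only [add_mul]
  exact add_le_add (add_le_add (add_le_add right_le left_le) (base_le u v)) (defect_le u v)

/-- The order is raised in steps `β < 1` because `leibnizDefect_apply` holds only for such `β`. -/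
lemma besselProductBound_nat_mul {β p q s : ℝ} (hβ : 0 < β) (hβ1 : β < 1) (hp : 1 ≤ p)
    (hq : 1 ≤ q) (hs : 1 ≤ s) (hg : 0 ≤ 1 / p + 1 / q - 1 / s)
    (hgp : 1 / p + 1 / q - 1 / s < 1 / p) (hgq : 1 / p + 1 / q - 1 / s < 1 / q) (m : ℕ)
    {a b : ℝ} (ha : m * β ≤ a) (hb : m * β ≤ b)
    (hgab : Module.finrank ℝ V * (1 / p + 1 / q - 1 / s) < a + b - m * β) :
    BesselProductBound V (m * β) a b p q s := by
  induction m generalizing a b with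
  | zero =>
    rw [Nat.cast_zero, zero_mul] at *
    exact besselProductBound_zero ha hb hp hq hg hgp hgq (by rwa [sub_zero] at hgab)
  | succ m ih =>
    rw [Nat.cast_succ, add_one_mul] at *
    have he : 0 ≤ m * β := by positivity
    obtain ⟨γ, hβγ, hγ⟩ := exists_between <| lt_min (half_lt_self hβ) <| show
      β / 2 < (a + b - m * β - Module.finrank ℝ V * (1 / p + 1 / q - 1 / s)) / 2 by linarith
    obtain ⟨hγβ, hγ_slack⟩ := lt_min_iff.1 hγ
    exact BesselProductBound.add he hβ hβ1 hβγ hp hq hs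
      (ih (by linarith) (by linarith) (by linarith)) (ih (by linarith) (by linarith) (by linarith))
      (ih (by linarith) (by linarith) (by linarith)) (ih (by linarith) (by linarith) (by linarith))

lemma besselProductBound {e a b p q s : ℝ} (he : 0 ≤ e) (hea : e ≤ a) (heb : e ≤ b) (hp : 1 ≤ p)
    (hq : 1 ≤ q) (hs : 1 ≤ s) (hg : 0 ≤ 1 / p + 1 / q - 1 / s)
    (hgp : 1 / p + 1 / q - 1 / s < 1 / p) (hgq : 1 / p + 1 / q - 1 / s < 1 / q)
    (hgab : Module.finrank ℝ V * (1 / p + 1 / q - 1 / s) < a + b - e) :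
    BesselProductBound V e a b p q s := by
  rcases he.eq_or_lt with rfl | he
  · exact besselProductBound_zero hea heb hp hq hg hgp hgq (by rwa [sub_zero] at hgab)
  obtain ⟨m, hm⟩ := exists_nat_gt e
  have m_pos : (0 : ℝ) < m := he.trans hm
  have e_eq : m * (e / m) = e := mul_div_cancel₀ e m_pos.ne'
  have bound := besselProductBound_nat_mul (V := V) (div_pos he m_pos) ((div_lt_one m_pos).2 hm)
    hp hq hs hg hgp hgq m (a := a) (b := b)
  rw [e_eq] at bound
  exact bound hea heb hgab

end ProductEstimate

section Interpolation

lemma exp_neg_mul_le_one {t x : ℝ} (ht : 0 ≤ t) (hx : 0 ≤ x) : Real.exp (-t * x) ≤ 1 := by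
  rw [Real.exp_le_one_iff, neg_mul, neg_nonpos]
  positivity

variable [FiniteDimensional ℝ V] [MeasurableSpace V] [BorelSpace V]

lemma measurable_heatSemigroup (f : 𝓢(V, ℂ)) (t : ℝ) : Measurable (heatSemigroup f t) :=
  (measurable_uncurry_heatSemigroup f).of_uncurry_left

lemma heatSemigroup_sub_eq_integral {t : ℝ} (ht : 0 ≤ t) (f : 𝓢(V, ℂ)) (x : V) :
    heatSemigroup f t x - f x =
      ∫ ξ, 𝐞 (inner ℝ ξ x) * (((Real.exp (-t * ‖ξ‖ ^ 2) - 1 : ℝ) : ℂ) * 𝓕 f ξ) := by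
  have heat_integrable : Integrable fun ξ =>
      (𝐞 (inner ℝ ξ x) : ℂ) * ((Real.exp (-t * ‖ξ‖ ^ 2) : ℂ) * 𝓕 f ξ) := by
    refine (𝓕 f).integrable.mono (Continuous.aestronglyMeasurable (by fun_prop))
      (.of_forall fun ξ => ?_)
    simp only [norm_mul, Circle.norm_coe, one_mul, Complex.norm_real,
      Real.norm_of_nonneg (Real.exp_pos _).le]
    exact mul_le_of_le_one_left (norm_nonneg _) (exp_neg_mul_le_one ht (sq_nonneg _))
  have inversion_integrable : Integrable fun ξ => (𝐞 (inner ℝ ξ x) : ℂ) * 𝓕 f ξ := by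
    refine (𝓕 f).integrable.mono (Continuous.aestronglyMeasurable (by fun_prop))
      (.of_forall fun ξ => ?_)
    rw [norm_mul, Circle.norm_coe, one_mul]
  rw [schwartz_inversion f x, heatSemigroup, ← integral_sub heat_integrable inversion_integrable]
  refine integral_congr_ae (.of_forall fun ξ => ?_)
  push_cast
  ring

lemma integral_exp_neg_mul_mul (x t : ℝ) :
    ∫ z in (0 : ℝ)..t, Real.exp (-z * x) * x = 1 - Real.exp (-t * x) := by
  have primitive (z : ℝ) :
      HasDerivAt (fun z => -Real.exp (-z * x)) (Real.exp (-z * x) * x) z :=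
    ((hasDerivAt_neg z).mul_const x).exp.neg.congr_deriv (by ring)
  rw [intervalIntegral.integral_eq_sub_of_hasDerivAt (fun z _ => primitive z)
    (Continuous.intervalIntegrable (by fun_prop) _ _)]
  simp only [neg_zero, zero_mul, Real.exp_zero]
  ring

lemma integrable_heatSemigroup_integrand (f : 𝓢(V, ℂ)) (t : ℝ) (x : V) :
    Integrable (Function.uncurry fun (z : ℝ) (ξ : V) =>
      (𝐞 (inner ℝ ξ x) : ℂ) * ((Real.exp (-z * ‖ξ‖ ^ 2) : ℂ) * 𝓕 f ξ))
      ((volume.restrict (Set.Ioc 0 t)).prod volume) := by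
  have one_integrable : IntegrableOn (fun _ : ℝ => (1 : ℂ)) (Set.Ioc 0 t) := by simp
  refine (one_integrable.mul_prod ((𝓕 f).integrable (μ := volume))).mono
    (Continuous.aestronglyMeasurable (by unfold Function.uncurry; fun_prop)) ?_
  rw [← Measure.restrict_univ (μ := (volume : Measure V)), Measure.prod_restrict]
  refine (ae_restrict_mem (measurableSet_Ioc.prod MeasurableSet.univ)).mono ?_
  rintro ⟨z, ξ⟩ ⟨hz, -⟩
  simp only [Function.uncurry, norm_mul, Circle.norm_coe, one_mul, Complex.norm_real,
    Real.norm_of_nonneg (Real.exp_pos _).le]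
  exact mul_le_of_le_one_left (norm_nonneg _) (exp_neg_mul_le_one hz.1.le (sq_nonneg _))

lemma heatSemigroup_sub_eq_neg_integral {t : ℝ} (ht : 0 ≤ t) (f : 𝓢(V, ℂ)) (x : V) :
    heatSemigroup f t x - f x =
      -∫ z in Set.Ioc 0 t, heatSemigroup (normalizedLaplacian f) z x := by
  rw [heatSemigroup_sub_eq_integral ht]
  simp only [heatSemigroup]
  rw [integral_integral_swap (integrable_heatSemigroup_integrand _ t x), ← integral_neg]
  refine integral_congr_ae (.of_forall fun ξ => ?_)
  have separated (z : ℝ) : (𝐞 (inner ℝ ξ x) : ℂ) *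
      ((Real.exp (-z * ‖ξ‖ ^ 2) : ℂ) * 𝓕 (normalizedLaplacian f) ξ) =
        ((Real.exp (-z * ‖ξ‖ ^ 2) * ‖ξ‖ ^ 2 : ℝ) : ℂ) * (𝐞 (inner ℝ ξ x) * 𝓕 f ξ) := by
    rw [fourier_normalizedLaplacian]
    push_cast
    ring
  simp only [separated]
  rw [integral_mul_const, integral_complex_ofReal, ← intervalIntegral.integral_of_le ht,
    integral_exp_neg_mul_mul]
  push_cast
  ring

lemma eLpNorm'_heatSemigroup_sub_le_two {p t : ℝ} (hp : 1 ≤ p) (ht : 0 < t) (f : 𝓢(V, ℂ)) :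
    eLpNorm' (fun x => heatSemigroup f t x - f x) p volume ≤ 2 * eLpNorm' f p volume := by
  have triangle := eLpNorm'_add_le (μ := volume)
    (measurable_heatSemigroup f t).aestronglyMeasurable
    f.continuous.neg.aestronglyMeasurable hp
  rw [eLpNorm'_neg] at triangle
  simp only [sub_eq_add_neg]
  refine triangle.trans ?_
  rw [two_mul]
  gcongr
  exact eLpNorm'_heatSemigroup_le hp ht f

lemma eLpNorm'_heatSemigroup_sub_le {p t : ℝ} (hp : 1 ≤ p) (ht : 0 < t) (f : 𝓢(V, ℂ)) :
    eLpNorm' (fun x => heatSemigroup f t x - f x) p volume ≤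
      ENNReal.ofReal t * eLpNorm' (normalizedLaplacian f) p volume := by
  have finite : eLpNorm' (fun x => heatSemigroup f t x - f x) p volume ≠ ⊤ :=
    ne_top_of_le_ne_top
      (ENNReal.mul_ne_top ENNReal.ofNat_ne_top (schwartz_eLpNorm'_ne_top (by linarith) f))
      (eLpNorm'_heatSemigroup_sub_le_two hp ht f)
  have measurable_sub : Measurable fun x => heatSemigroup f t x - f x :=
    (measurable_heatSemigroup f t).sub f.continuous.measurable
  refine (eLpNorm'_le_lintegral_mul_eLpNorm' (ν := volume.restrict (Set.Ioc 0 t)) hp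
    measurable_sub finite (W := fun _ => 1) measurable_const
    (measurable_uncurry_heatSemigroup (normalizedLaplacian f)) fun x => ?_).trans ?_
  · rw [heatSemigroup_sub_eq_neg_integral ht.le, enorm_neg]
    simpa only [one_mul] using enorm_integral_le_lintegral_enorm _
  · calc ∫⁻ z in Set.Ioc 0 t, 1 * eLpNorm' (heatSemigroup (normalizedLaplacian f) z) p volume
        ≤ ∫⁻ _ in Set.Ioc 0 t, eLpNorm' (normalizedLaplacian f) p volume := by
          refine setLIntegral_mono measurable_const fun z hz => ?_
          rw [one_mul]
          exact eLpNorm'_heatSemigroup_le hp hz.1 _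
      _ = ENNReal.ofReal t * eLpNorm' (normalizedLaplacian f) p volume := by
          rw [setLIntegral_const, Real.volume_Ioc, sub_zero, mul_comm]

lemma integrable_gammaWeight_neg_integrand {β : ℝ} (hβ2 : β < 2) (f : 𝓢(V, ℂ)) (x : V) :
    Integrable (Function.uncurry fun (t : ℝ) (ξ : V) => (gammaWeight (-β) t : ℂ) *
      (𝐞 (inner ℝ ξ x) * (((Real.exp (-t * ‖ξ‖ ^ 2) - 1 : ℝ) : ℂ) * 𝓕 f ξ)))
      ((volume.restrict (Set.Ioi 0)).prod volume) := by
  have moment_integrable : IntegrableOn (fun t => gammaWeight (-β) t * t) (Set.Ioi 0) := by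
    refine ⟨(Measurable.aestronglyMeasurable (by fun_prop)), lt_of_eq_of_lt ?_
      (lintegral_gammaWeight_mul_rpow_ne_top (γ := -β) (τ := -1) (by linarith)).lt_top⟩
    refine setLIntegral_congr_fun measurableSet_Ioi fun t ht => ?_
    simp only [neg_neg, Real.rpow_one, enorm_mul]
    rw [Real.enorm_of_nonneg (le_of_lt ht)]
  refine (moment_integrable.mul_prod
    (((𝓕 (normalizedLaplacian f)).integrable (μ := volume)).norm)).mono
    (Measurable.aestronglyMeasurable ?_) ?_
  · have measurable_fourier := (𝓕 f).continuous.measurable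
    unfold Function.uncurry
    fun_prop
  rw [← Measure.restrict_univ (μ := (volume : Measure V)), Measure.prod_restrict]
  refine (ae_restrict_mem (measurableSet_Ioi.prod MeasurableSet.univ)).mono ?_
  rintro ⟨t, ξ⟩ ⟨ht, -⟩
  have ht : 0 < t := ht
  have exp_sub_one : ‖Real.exp (-t * ‖ξ‖ ^ 2) - 1‖ ≤ t * ‖ξ‖ ^ 2 := by
    rw [norm_sub_rev, Real.norm_of_nonneg (sub_nonneg.2 (exp_neg_mul_le_one ht.le (sq_nonneg _)))]
    linarith [Real.add_one_le_exp (-t * ‖ξ‖ ^ 2)]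
  simp only [Function.uncurry, norm_mul, Circle.norm_coe, one_mul, Complex.norm_real, norm_norm,
    fourier_normalizedLaplacian, norm_pow, Real.norm_of_nonneg ht.le]
  calc ‖gammaWeight (-β) t‖ * (‖Real.exp (-t * ‖ξ‖ ^ 2) - 1‖ * ‖𝓕 f ξ‖)
      ≤ ‖gammaWeight (-β) t‖ * (t * ‖ξ‖ ^ 2 * ‖𝓕 f ξ‖) := by gcongr
    _ = ‖gammaWeight (-β) t‖ * t * (‖ξ‖ ^ 2 * ‖𝓕 f ξ‖) := by ring

lemma bessel_sub_apply {β : ℝ} (hβ : 0 < β) (hβ2 : β < 2) (f : 𝓢(V, ℂ)) (x : V) :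
    (bessel β f - f) x =
      ∫ t in Set.Ioi (0 : ℝ), (gammaWeight (-β) t : ℂ) * (heatSemigroup f t x - f x) := by
  have symbol_form : (bessel β f - f) x =
      ∫ ξ, 𝐞 (inner ℝ ξ x) * (((besselSymbol β ξ - 1 : ℝ) : ℂ) * 𝓕 f ξ) := by
    rw [schwartz_inversion]
    refine integral_congr_ae (.of_forall fun ξ => ?_)
    have fourier_sub : 𝓕 (bessel β f - f) = 𝓕 (bessel β f) - 𝓕 f :=
      map_sub (FourierTransform.fourierCLM ℂ 𝓢(V, ℂ)) _ _
    simp only [fourier_sub, sub_apply, fourier_bessel]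
    push_cast
    ring
  calc (bessel β f - f) x
      = ∫ ξ, ∫ t in Set.Ioi (0 : ℝ), (gammaWeight (-β) t : ℂ) *
          (𝐞 (inner ℝ ξ x) * (((Real.exp (-t * ‖ξ‖ ^ 2) - 1 : ℝ) : ℂ) * 𝓕 f ξ)) := by
        rw [symbol_form]
        refine integral_congr_ae (.of_forall fun ξ => ?_)
        simp only [besselSymbol]
        rw [← integral_gammaWeight_neg_mul_exp_sub_one hβ hβ2 (sq_nonneg ‖ξ‖),
          ← integral_complex_ofReal, ← integral_mul_const, ← integral_const_mul]
        refine integral_congr_ae (.of_forall fun t => ?_)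
        push_cast
        ring
    _ = ∫ t in Set.Ioi (0 : ℝ), ∫ ξ, (gammaWeight (-β) t : ℂ) *
          (𝐞 (inner ℝ ξ x) * (((Real.exp (-t * ‖ξ‖ ^ 2) - 1 : ℝ) : ℂ) * 𝓕 f ξ)) :=
        (integral_integral_swap (integrable_gammaWeight_neg_integrand hβ2 f x)).symm
    _ = ∫ t in Set.Ioi (0 : ℝ), (gammaWeight (-β) t : ℂ) * (heatSemigroup f t x - f x) := by
        refine setIntegral_congr_fun measurableSet_Ioi fun t ht => ?_
        simp only [integral_const_mul, heatSemigroup_sub_eq_integral (le_of_lt ht)]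

lemma eLpNorm'_heatSemigroup_sub_le_interpolated {p s t : ℝ} (hp : 1 ≤ p) (hs : 0 ≤ s)
    (hs1 : s ≤ 1) (ht : 0 < t) (f : 𝓢(V, ℂ)) :
    eLpNorm' (fun x => heatSemigroup f t x - f x) p volume ≤ ENNReal.ofReal (t ^ s) *
      ((2 * eLpNorm' f p volume) ^ (1 - s) * eLpNorm' (normalizedLaplacian f) p volume ^ s) := by
  set N := eLpNorm' (fun x => heatSemigroup f t x - f x) p volume
  calc N = N ^ (1 - s) * N ^ s := by
        rw [← ENNReal.rpow_add_of_nonneg _ _ (sub_nonneg.2 hs1) hs, sub_add_cancel,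
          ENNReal.rpow_one]
    _ ≤ (2 * eLpNorm' f p volume) ^ (1 - s) *
          (ENNReal.ofReal t * eLpNorm' (normalizedLaplacian f) p volume) ^ s := by
        gcongr
        · exact eLpNorm'_heatSemigroup_sub_le_two hp ht f
        · exact eLpNorm'_heatSemigroup_sub_le hp ht f
    _ = _ := by
        rw [ENNReal.mul_rpow_of_nonneg _ _ hs, ENNReal.ofReal_rpow_of_nonneg ht.le hs]
        ring

lemma exists_eLpNorm'_bessel_le_interpolated {β s p : ℝ} (hβ : 0 < β) (hβs : β / 2 < s)
    (hs1 : s < 1) (hp : 1 ≤ p) :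
    ∃ C : ℝ≥0∞, C ≠ ⊤ ∧ ∀ f : 𝓢(V, ℂ), eLpNorm' (bessel β f) p volume ≤ eLpNorm' f p volume +
      C * ((2 * eLpNorm' f p volume) ^ (1 - s) *
        eLpNorm' (normalizedLaplacian f) p volume ^ s) := by
  refine ⟨_, lintegral_gammaWeight_mul_rpow_ne_top (γ := -β) (τ := -s) (by linarith),
    fun f => ?_⟩
  have triangle := eLpNorm'_add_le (μ := volume) f.continuous.aestronglyMeasurable
    (bessel β f - f).continuous.aestronglyMeasurable hp
  rw [← FunLike.coe_add, add_sub_cancel] at triangle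
  refine triangle.trans (add_le_add_right ?_ _)
  refine (eLpNorm'_le_lintegral_mul_eLpNorm' (ν := volume.restrict (Set.Ioi 0)) hp
    (bessel β f - f).continuous.measurable (schwartz_eLpNorm'_ne_top (by linarith) _)
    (W := fun t => ‖gammaWeight (-β) t‖ₑ) (by fun_prop)
    (G := fun t x => heatSemigroup f t x - f x)
    ((measurable_uncurry_heatSemigroup f).sub (f.continuous.measurable.comp measurable_snd))
    fun x => ?_).trans ?_
  · rw [bessel_sub_apply hβ (by linarith)]
    refine (enorm_integral_le_lintegral_enorm _).trans_eq (lintegral_congr fun t => ?_)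
    rw [enorm_mul, enorm_ofReal]
  · rw [← lintegral_mul_const _ (by fun_prop)]
    refine setLIntegral_mono (by fun_prop) fun t ht => ?_
    rw [mul_assoc, neg_neg]
    gcongr
    exact eLpNorm'_heatSemigroup_sub_le_interpolated hp (by linarith) hs1.le ht f

end Interpolation

section Dilations

/-- The dilation `x ↦ f (l • x)` of a Schwartz function. -/
def dilate (l : ℝˣ) : 𝓢(V, ℂ) →L[ℂ] 𝓢(V, ℂ) :=
  SchwartzMap.compCLMOfContinuousLinearEquiv ℂ (ContinuousLinearEquiv.smulLeft l)

lemma dilate_apply (l : ℝˣ) (f : 𝓢(V, ℂ)) (x : V) : dilate l f x = f ((l : ℝ) • x) := rfl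

variable [FiniteDimensional ℝ V] [MeasurableSpace V] [BorelSpace V]

lemma fourier_dilate {l : ℝˣ} (hl : 0 < (l : ℝ)) (f : 𝓢(V, ℂ)) (ξ : V) :
    𝓕 (dilate l f) ξ =
      (((l : ℝ) ^ Module.finrank ℝ V)⁻¹ : ℝ) * 𝓕 f ((l : ℝ)⁻¹ • ξ) := by
  have change_of_variables := Measure.integral_comp_smul_of_nonneg (volume : Measure V)
    (fun v => Complex.exp (((-2 * π * inner ℝ v ((l : ℝ)⁻¹ • ξ) : ℝ) : ℂ) * Complex.I) • f v) l
    (hR := hl.le)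
  rw [Complex.real_smul] at change_of_variables
  rw [SchwartzMap.fourier_coe, SchwartzMap.fourier_coe, Real.fourier_eq', Real.fourier_eq',
    ← change_of_variables]
  refine integral_congr_ae (.of_forall fun v => ?_)
  simp only [dilate_apply]
  rw [real_inner_smul_left, real_inner_smul_right, mul_inv_cancel_left₀ hl.ne']

lemma eLpNorm'_dilate {l : ℝˣ} {p : ℝ} (hl : 0 < (l : ℝ)) (hp : 0 < p) (f : 𝓢(V, ℂ)) :
    eLpNorm' (dilate l f) p volume =
      ENNReal.ofReal ((l : ℝ) ^ (-(Module.finrank ℝ V / p))) * eLpNorm' f p volume := by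
  have change_of_variables := lintegral_map (μ := (volume : Measure V))
    (f := fun x => ‖f x‖ₑ ^ p) (g := fun x => (l : ℝ) • x)
    (f.continuous.measurable.enorm.pow_const _) (measurable_const_smul (l : ℝ))
  rw [Measure.map_addHaar_smul _ hl.ne', lintegral_smul_measure, smul_eq_mul]
    at change_of_variables
  simp only [eLpNorm', dilate_apply]
  rw [← change_of_variables, ENNReal.mul_rpow_of_nonneg _ _ (by positivity),
    abs_of_pos (by positivity), ENNReal.ofReal_rpow_of_nonneg (by positivity) (by positivity),
    ← Real.rpow_natCast, ← Real.rpow_neg hl.le, ← Real.rpow_mul hl.le, mul_one_div, neg_div]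

lemma normalizedLaplacian_dilate {l : ℝˣ} (hl : 0 < (l : ℝ)) (f : 𝓢(V, ℂ)) :
    normalizedLaplacian (dilate l f) =
      (((l : ℝ) ^ 2 : ℝ) : ℂ) • dilate l (normalizedLaplacian f) := by
  refine schwartz_ext_fourier fun ξ => ?_
  have fourier_smul (c : ℂ) (g : 𝓢(V, ℂ)) : 𝓕 (c • g) = c • 𝓕 g :=
    map_smul (FourierTransform.fourierCLM ℂ 𝓢(V, ℂ)) _ _
  have l_ne_zero : (l : ℂ) ≠ 0 := by exact_mod_cast hl.ne'
  rw [fourier_smul, smul_apply, smul_eq_mul, fourier_normalizedLaplacian,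
    fourier_dilate hl, fourier_dilate hl, fourier_normalizedLaplacian, norm_smul, norm_inv,
    Real.norm_of_nonneg hl.le]
  push_cast
  field_simp

lemma eLpNorm'_sq_smul {r : ℝ} (hr : 0 < r) (c : ℝ) (f : 𝓢(V, ℂ)) :
    eLpNorm' (((c ^ 2 : ℝ) : ℂ) • f : 𝓢(V, ℂ)) r volume =
      ENNReal.ofReal (c ^ 2) * eLpNorm' f r volume := by
  rw [FunLike.coe_smul, eLpNorm'_const_smul _ hr, enorm_ofReal,
    Real.enorm_of_nonneg (sq_nonneg c)]

lemma eLpNorm'_normalizedLaplacian_dilate {l : ℝˣ} {p : ℝ} (hl : 0 < (l : ℝ)) (hp : 0 < p)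
    (f : 𝓢(V, ℂ)) :
    eLpNorm' (normalizedLaplacian (dilate l f)) p volume =
      ENNReal.ofReal ((l : ℝ) ^ (2 - Module.finrank ℝ V / p)) *
        eLpNorm' (normalizedLaplacian f) p volume := by
  rw [normalizedLaplacian_dilate hl, eLpNorm'_sq_smul hp, eLpNorm'_dilate hl hp, ← mul_assoc,
    ← ENNReal.ofReal_mul (by positivity), ← Real.rpow_two, ← Real.rpow_add hl, sub_eq_add_neg]

variable (V) in
/-- The dilations `f_l = f (l • ·)`, `l ≥ 1`, have `H^a_p` norm `O(l ^ (a + η - n / p))` for every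
`η > 0`. The loss `η` lets the fractional orders follow from an interpolation inequality. -/
def HasDilationBound (p a : ℝ) : Prop :=
  ∀ (f : 𝓢(V, ℂ)) (η : ℝ), 0 < η → ∃ C : ℝ≥0∞, C ≠ ⊤ ∧ ∀ l : ℝˣ, 1 ≤ (l : ℝ) →
    eLpNorm' (bessel a (dilate l f)) p volume ≤
      C * ENNReal.ofReal ((l : ℝ) ^ (a + η - Module.finrank ℝ V / p))

lemma hasDilationBound_zero {p : ℝ} (hp : 0 < p) : HasDilationBound V p 0 := by
  refine fun f η hη => ⟨_, schwartz_eLpNorm'_ne_top hp f, fun l hl => ?_⟩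
  rw [bessel_zero, eLpNorm'_dilate (zero_lt_one.trans_le hl) hp, mul_comm]
  gcongr
  linarith

lemma hasDilationBound_of_lt_two {p β : ℝ} (hp : 1 ≤ p) (hβ : 0 < β) (hβ2 : β < 2) :
    HasDilationBound V p β := by
  intro f η hη
  have hp0 : 0 < p := zero_lt_one.trans_le hp
  obtain ⟨s, hβs, hs⟩ := exists_between <| lt_min (show β / 2 < 1 by linarith) <|
    show β / 2 < (β + η) / 2 by linarith
  obtain ⟨hs1, hsη⟩ := lt_min_iff.1 hs
  have hs0 : 0 < s := (half_pos hβ).trans hβs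
  obtain ⟨C, hC, interpolation⟩ := exists_eLpNorm'_bessel_le_interpolated (V := V) hβ hβs hs1 hp
  have norm_f_ne_top := schwartz_eLpNorm'_ne_top hp0 f
  have norm_laplacian_ne_top := schwartz_eLpNorm'_ne_top hp0 (normalizedLaplacian f)
  refine ⟨eLpNorm' f p volume + C * ((2 * eLpNorm' f p volume) ^ (1 - s) *
    eLpNorm' (normalizedLaplacian f) p volume ^ s), by finiteness, fun l hl => ?_⟩
  have hl0 : 0 < (l : ℝ) := zero_lt_one.trans_le hl
  set δ : ℝ := Module.finrank ℝ V / p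
  have interpolated_scale : ENNReal.ofReal ((l : ℝ) ^ (-δ)) ^ (1 - s) *
      ENNReal.ofReal ((l : ℝ) ^ (2 - δ)) ^ s = ENNReal.ofReal ((l : ℝ) ^ (2 * s - δ)) := by
    rw [ENNReal.ofReal_rpow_of_nonneg (by positivity) (by linarith),
      ENNReal.ofReal_rpow_of_nonneg (by positivity) hs0.le,
      ← ENNReal.ofReal_mul (by positivity), ← Real.rpow_mul hl0.le, ← Real.rpow_mul hl0.le,
      ← Real.rpow_add hl0]
    ring_nf
  have low_scale_le : (l : ℝ) ^ (-δ) ≤ (l : ℝ) ^ (β + η - δ) :=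
    Real.rpow_le_rpow_of_exponent_le hl (by linarith)
  have scale_le : (l : ℝ) ^ (2 * s - δ) ≤ (l : ℝ) ^ (β + η - δ) :=
    Real.rpow_le_rpow_of_exponent_le hl (by linarith)
  refine (interpolation (dilate l f)).trans ?_
  rw [eLpNorm'_dilate hl0 hp0, eLpNorm'_normalizedLaplacian_dilate hl0 hp0, mul_left_comm 2,
    ENNReal.mul_rpow_of_nonneg _ _ (by linarith), ENNReal.mul_rpow_of_nonneg _ _ hs0.le,
    mul_mul_mul_comm, interpolated_scale, mul_left_comm C, add_mul, mul_comm (eLpNorm' f p volume),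
    mul_comm (C * _)]
  gcongr

lemma HasDilationBound.add_two {p a : ℝ} (hp : 1 ≤ p) (h : HasDilationBound V p a) :
    HasDilationBound V p (a + 2) := by
  intro f η hη
  have hp0 : 0 < p := zero_lt_one.trans_le hp
  obtain ⟨C₁, hC₁, bound⟩ := h f η hη
  obtain ⟨C₂, hC₂, laplacian_bound⟩ := h (normalizedLaplacian f) η hη
  refine ⟨C₁ + C₂, by finiteness, fun l hl => ?_⟩
  have hl0 : 0 < (l : ℝ) := zero_lt_one.trans_le hl
  set δ : ℝ := Module.finrank ℝ V / p
  have low_scale_le : (l : ℝ) ^ (a + η - δ) ≤ (l : ℝ) ^ (a + 2 + η - δ) :=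
    Real.rpow_le_rpow_of_exponent_le hl (by linarith)
  have scale_eq : ENNReal.ofReal ((l : ℝ) ^ 2) * ENNReal.ofReal ((l : ℝ) ^ (a + η - δ)) =
      ENNReal.ofReal ((l : ℝ) ^ (a + 2 + η - δ)) := by
    rw [← ENNReal.ofReal_mul (by positivity), ← Real.rpow_two, ← Real.rpow_add hl0]
    ring_nf
  calc eLpNorm' (bessel (a + 2) (dilate l f)) p volume
      ≤ eLpNorm' (bessel a (dilate l f)) p volume +
          ENNReal.ofReal ((l : ℝ) ^ 2) *
            eLpNorm' (bessel a (dilate l (normalizedLaplacian f))) p volume := by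
        rw [bessel_add_two, normalizedLaplacian_dilate hl0, map_smul, ← eLpNorm'_sq_smul hp0]
        exact eLpNorm'_add_le (SchwartzMap.continuous _).aestronglyMeasurable
          (SchwartzMap.continuous _).aestronglyMeasurable hp
    _ ≤ C₁ * ENNReal.ofReal ((l : ℝ) ^ (a + η - δ)) +
          ENNReal.ofReal ((l : ℝ) ^ 2) * (C₂ * ENNReal.ofReal ((l : ℝ) ^ (a + η - δ))) := by
        gcongr
        · exact bound l hl
        · exact laplacian_bound l hl
    _ ≤ (C₁ + C₂) * ENNReal.ofReal ((l : ℝ) ^ (a + 2 + η - δ)) := by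
        rw [mul_left_comm, scale_eq, add_mul]
        gcongr

lemma hasDilationBound {p a : ℝ} (hp : 1 ≤ p) (ha : 0 ≤ a) : HasDilationBound V p a := by
  have shifted (m : ℕ) {β : ℝ} (hβ : 0 ≤ β) (hβ2 : β < 2) :
      HasDilationBound V p (β + 2 * m) := by
    induction m with
    | zero =>
      rw [Nat.cast_zero, mul_zero, add_zero]
      rcases hβ.eq_or_lt with rfl | hβ
      · exact hasDilationBound_zero (zero_lt_one.trans_le hp)
      · exact hasDilationBound_of_lt_two hp hβ hβ2
    | succ m ih =>
      rw [Nat.cast_succ, mul_add_one, ← add_assoc]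
      exact ih.add_two hp
  have floor_le := Nat.floor_le (div_nonneg ha zero_le_two)
  have lt_floor := Nat.lt_floor_add_one (a / 2)
  have bound := shifted ⌊a / 2⌋₊ (β := a - 2 * ⌊a / 2⌋₊) (by linarith) (by linarith)
  rwa [sub_add_cancel] at bound

end Dilations

section Pairing

variable [FiniteDimensional ℝ V] [MeasurableSpace V] [BorelSpace V]

lemma fourier_neg_of_conj_eq {f : 𝓢(V, ℂ)} (hf : ∀ x, starRingEnd ℂ (f x) = f x) (ξ : V) :
    𝓕 f (-ξ) = starRingEnd ℂ (𝓕 f ξ) := by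
  rw [SchwartzMap.fourier_coe, Real.fourier_eq, Real.fourier_eq, ← integral_conj]
  refine integral_congr_ae (.of_forall fun v => ?_)
  simp only [Circle.smul_def, smul_eq_mul, map_mul, hf, inner_neg_right, neg_neg,
    ← Circle.coe_inv_eq_conj, ← AddChar.map_neg_eq_inv]

lemma integrable_besselSymbol_mul_sq (a : ℝ) (f : 𝓢(V, ℂ)) :
    Integrable fun ξ => besselSymbol a ξ * ‖𝓕 f ξ‖ ^ 2 := by
  refine (schwartzMul (𝓕 (bessel a f)) (𝓕 f)).integrable.norm.congr (.of_forall fun ξ => ?_)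
  simp only [schwartzMul_apply, fourier_bessel, norm_mul, Complex.norm_real,
    Real.norm_of_nonneg (besselSymbol_pos a ξ).le]
  ring

lemma integral_besselSymbol_mul_sq_nonneg (a : ℝ) (f : 𝓢(V, ℂ)) :
    0 ≤ ∫ ξ, besselSymbol a ξ * ‖𝓕 f ξ‖ ^ 2 :=
  integral_nonneg fun ξ => mul_nonneg (besselSymbol_pos a ξ).le (sq_nonneg _)

lemma fourier_schwartzMul_bessel_zero (a : ℝ) {f : 𝓢(V, ℂ)}
    (hf : ∀ x, starRingEnd ℂ (f x) = f x) :
    𝓕 (schwartzMul (bessel a f) f) 0 = ((∫ ξ, besselSymbol a ξ * ‖𝓕 f ξ‖ ^ 2 : ℝ) : ℂ) := by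
  rw [fourier_schwartzMul, ← integral_complex_ofReal]
  refine integral_congr_ae (.of_forall fun ξ => ?_)
  simp only [fourier_bessel, zero_sub, fourier_neg_of_conj_eq hf, mul_assoc, Complex.mul_conj,
    Complex.normSq_eq_norm_sq]
  push_cast
  rfl

lemma enorm_fourier_le (f : 𝓢(V, ℂ)) (ξ : V) : ‖𝓕 f ξ‖ₑ ≤ eLpNorm' f 1 volume := by
  rw [SchwartzMap.fourier_coe, Real.fourier_eq]
  refine (enorm_integral_le_lintegral_enorm _).trans_eq ?_
  simp only [eLpNorm', ENNReal.rpow_one, div_one, ← ofReal_norm, Circle.norm_smul]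

lemma ofReal_integral_besselSymbol_mul_sq_le {q r : ℝ} (a : ℝ) (hqr : q.HolderConjugate r)
    {f : 𝓢(V, ℂ)} (hf : ∀ x, starRingEnd ℂ (f x) = f x) :
    ENNReal.ofReal (∫ ξ, besselSymbol a ξ * ‖𝓕 f ξ‖ ^ 2) ≤
      eLpNorm' (bessel a f) q volume * eLpNorm' f r volume := by
  calc ENNReal.ofReal (∫ ξ, besselSymbol a ξ * ‖𝓕 f ξ‖ ^ 2)
      = ‖𝓕 (schwartzMul (bessel a f) f) 0‖ₑ := by
        rw [fourier_schwartzMul_bessel_zero a hf, enorm_ofReal,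
          Real.enorm_of_nonneg (integral_besselSymbol_mul_sq_nonneg a f)]
    _ ≤ eLpNorm' (schwartzMul (bessel a f) f) 1 volume := enorm_fourier_le _ 0
    _ ≤ eLpNorm' (bessel a f) q volume * eLpNorm' f r volume :=
        eLpNorm'_schwartzMul_le hqr.pos hqr.symm.pos
          (by simpa only [one_div, inv_one] using hqr.inv_add_inv_eq_one.symm) _ _

end Pairing

section LowerBound

variable [FiniteDimensional ℝ V] [MeasurableSpace V] [BorelSpace V]

lemma rpow_mul_integral_le_integral_besselSymbol_dilate {a : ℝ} {l : ℝˣ} (ha : 0 ≤ a)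
    (hl : 0 < (l : ℝ)) (g : 𝓢(V, ℂ)) :
    (l : ℝ) ^ (a - Module.finrank ℝ V) * ∫ ξ, ‖ξ‖ ^ a * ‖𝓕 g ξ‖ ^ 2 ≤
      ∫ ξ, besselSymbol a ξ * ‖𝓕 (dilate l g) ξ‖ ^ 2 := by
  have change_of_variables := Measure.integral_comp_inv_smul_of_nonneg (volume : Measure V)
    (fun ξ => ‖ξ‖ ^ a * ‖𝓕 g ξ‖ ^ 2) hl.le
  have scale_eq : (l : ℝ) ^ (a - Module.finrank ℝ V) =
      l ^ a * (((l : ℝ) ^ Module.finrank ℝ V)⁻¹) ^ 2 * l ^ Module.finrank ℝ V := by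
    rw [Real.rpow_sub hl, Real.rpow_natCast]
    field_simp
  rw [smul_eq_mul] at change_of_variables
  rw [scale_eq, mul_assoc _ ((l : ℝ) ^ Module.finrank ℝ V), ← change_of_variables,
    ← integral_const_mul]
  refine integral_mono_of_nonneg (.of_forall fun ξ => by positivity)
    (integrable_besselSymbol_mul_sq a _) (.of_forall fun ξ => ?_)
  have symbol_le := norm_rpow_le_besselSymbol ha ξ
  have l_rpow_ne_zero : (l : ℝ) ^ a ≠ 0 := (Real.rpow_pos_of_pos hl a).ne'
  calc _ = ‖ξ‖ ^ a * ‖𝓕 (dilate l g) ξ‖ ^ 2 := by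
        beta_reduce
        rw [fourier_dilate hl, norm_mul, Complex.norm_real, Real.norm_of_nonneg (by positivity),
          norm_smul, norm_inv, Real.norm_of_nonneg hl.le,
          Real.mul_rpow (by positivity) (norm_nonneg _), Real.inv_rpow hl.le]
        field_simp
    _ ≤ _ := mul_le_mul_of_nonneg_right symbol_le (sq_nonneg _)

lemma integral_norm_rpow_mul_sq_fourier_pos [Nontrivial V] {a : ℝ} (ha : 0 ≤ a) {g : 𝓢(V, ℂ)}
    (hg : g ≠ 0) : 0 < ∫ ξ, ‖ξ‖ ^ a * ‖𝓕 g ξ‖ ^ 2 := by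
  have continuous_integrand : Continuous fun ξ : V => ‖ξ‖ ^ a * ‖𝓕 g ξ‖ ^ 2 :=
    (continuous_norm.rpow_const fun _ => Or.inr ha).mul ((𝓕 g).continuous.norm.pow 2)
  have integrable_integrand : Integrable fun ξ : V => ‖ξ‖ ^ a * ‖𝓕 g ξ‖ ^ 2 := by
    refine (integrable_besselSymbol_mul_sq a g).mono' continuous_integrand.aestronglyMeasurable
      (.of_forall fun ξ => ?_)
    rw [Real.norm_of_nonneg (by positivity)]
    exact mul_le_mul_of_nonneg_right (norm_rpow_le_besselSymbol ha ξ) (sq_nonneg _)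
  obtain ⟨ξ, hξ, fourier_ne_zero⟩ : ∃ ξ : V, ξ ≠ 0 ∧ 𝓕 g ξ ≠ 0 := by
    by_contra! fourier_eq_zero
    have fourier_eq := Continuous.ext_on (dense_compl_singleton (0 : V)) (𝓕 g).continuous
      continuous_const fourier_eq_zero
    refine hg (schwartz_ext_fourier fun ξ => (congrFun fourier_eq ξ).trans ?_)
    rw [← FourierTransform.fourierCLM_apply (R := ℂ), map_zero, zero_apply]
  exact integral_pos_of_integrable_nonneg_nonzero (x := ξ) continuous_integrand
    integrable_integrand (fun ξ => by positivity) (by positivity)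

lemma exists_le_eLpNorm'_bessel_dilate [Nontrivial V] {a q : ℝ} (ha : 0 ≤ a) (hq : 1 < q)
    {g : 𝓢(V, ℂ)} (hg : ∀ x, starRingEnd ℂ (g x) = g x) (hg0 : g ≠ 0) :
    ∃ c : ℝ, 0 < c ∧ ∀ l : ℝˣ, 0 < (l : ℝ) →
      c * (l : ℝ) ^ (a - Module.finrank ℝ V / q) ≤
        (eLpNorm' (bessel a (dilate l g)) q volume).toReal := by
  obtain ⟨r, hqr⟩ : ∃ r, q.HolderConjugate r := ⟨_, .conjExponent hq⟩
  set A := (eLpNorm' g r volume).toReal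
  set I := ∫ ξ, ‖ξ‖ ^ a * ‖𝓕 g ξ‖ ^ 2
  have hI : 0 < I := integral_norm_rpow_mul_sq_fourier_pos ha hg0
  refine ⟨I / (A + 1), by positivity, fun l hl => ?_⟩
  set n : ℝ := (Module.finrank ℝ V : ℝ)
  have pairing := ENNReal.toReal_mono (ENNReal.mul_ne_top
      (schwartz_eLpNorm'_ne_top hqr.pos _) (schwartz_eLpNorm'_ne_top hqr.symm.pos _))
    (ofReal_integral_besselSymbol_mul_sq_le a hqr (f := dilate l g) fun x => hg _)
  rw [ENNReal.toReal_ofReal (integral_besselSymbol_mul_sq_nonneg a _), ENNReal.toReal_mul,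
    eLpNorm'_dilate hl hqr.symm.pos, ENNReal.toReal_mul,
    ENNReal.toReal_ofReal (by positivity)] at pairing
  set B := (eLpNorm' (bessel a (dilate l g)) q volume).toReal
  have scale_eq : (l : ℝ) ^ (a - n) = l ^ (a - n / q) * l ^ (-(n / r)) := by
    rw [← Real.rpow_add hl, div_eq_mul_inv n r, ← hqr.one_sub_inv]
    ring_nf
  have scaled : l ^ (-(n / r)) * ((l : ℝ) ^ (a - n / q) * I) ≤ l ^ (-(n / r)) * (B * A) := by
    calc _ = (l : ℝ) ^ (a - n) * I := by rw [scale_eq]; ring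
      _ ≤ B * (l ^ (-(n / r)) * A) :=
        (rpow_mul_integral_le_integral_besselSymbol_dilate ha hl g).trans pairing
      _ = l ^ (-(n / r)) * (B * A) := by ring
  have unscaled := le_of_mul_le_mul_left scaled (by positivity)
  rw [div_mul_eq_mul_div, div_le_iff₀ (by positivity)]
  nlinarith [(ENNReal.toReal_nonneg : 0 ≤ B)]

end LowerBound

section Necessity

variable [FiniteDimensional ℝ V]

/-- The Schwartz function underlying a smooth bump. -/
def schwartzBump (b : ContDiffBump (0 : V)) : 𝓢(V, ℂ) :=
  HasCompactSupport.toSchwartzMap (f := fun x => (b x : ℂ))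
    (b.hasCompactSupport.comp_left Complex.ofReal_zero) (Complex.ofRealCLM.contDiff.comp b.contDiff)

lemma schwartzBump_apply (b : ContDiffBump (0 : V)) (x : V) : schwartzBump b x = (b x : ℂ) := rfl

lemma hasCompactSupport_schwartzBump (b : ContDiffBump (0 : V)) :
    HasCompactSupport (schwartzBump b) :=
  b.hasCompactSupport.comp_left Complex.ofReal_zero

lemma schwartzMul_dilate_schwartzBump {b₁ b₂ : ContDiffBump (0 : V)} (hb : b₁.rOut ≤ b₂.rIn)
    {l : ℝˣ} (hl : 1 ≤ (l : ℝ)) :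
    schwartzMul (dilate l (schwartzBump b₁)) (schwartzBump b₂) =
      dilate l (schwartzBump b₁) := by
  ext x
  rw [schwartzMul_apply, dilate_apply, schwartzBump_apply, schwartzBump_apply]
  rcases le_or_gt ‖x‖ b₂.rIn with hx | hx
  · rw [b₂.one_of_mem_closedBall (mem_closedBall_zero_iff.2 hx), Complex.ofReal_one, mul_one]
  · have vanishes : b₁ ((l : ℝ) • x) = 0 := by
      refine b₁.zero_of_le_dist ?_
      rw [dist_zero_right, norm_smul, Real.norm_of_nonneg (zero_le_one.trans hl)]
      nlinarith [norm_nonneg x]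
    rw [vanishes, Complex.ofReal_zero, zero_mul]

variable (V) in
lemma exists_dilations_absorbed : ∃ g χ : 𝓢(V, ℂ), HasCompactSupport g ∧ HasCompactSupport χ ∧
    g ≠ 0 ∧ (∀ x, starRingEnd ℂ (g x) = g x) ∧
    ∀ l : ℝˣ, 1 ≤ (l : ℝ) → schwartzMul (dilate l g) χ = dilate l g := by
  let b₁ : ContDiffBump (0 : V) := ⟨1, 2, one_pos, one_lt_two⟩
  let b₂ : ContDiffBump (0 : V) := ⟨2, 3, two_pos, by norm_num⟩
  refine ⟨schwartzBump b₁, schwartzBump b₂, hasCompactSupport_schwartzBump b₁,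
    hasCompactSupport_schwartzBump b₂, fun h => one_ne_zero (α := ℂ) ?_,
    fun x => Complex.conj_ofReal _, fun l hl => schwartzMul_dilate_schwartzBump le_rfl hl⟩
  rw [← zero_apply (F := 𝓢(V, ℂ)) (0 : V), ← h, schwartzBump_apply, b₁.one_of_mem_closedBall
    (mem_closedBall_self b₁.rIn_pos.le), Complex.ofReal_one]

variable [MeasurableSpace V] [BorelSpace V]

-- Test the bound on `u = g (l • ·)` and `v = 1` near `0`, so that `u v = u`, and let `l → ∞`.
lemma le_of_bessel_module_bound [Nontrivial V] {p q ν : ℝ} {C : ℝ≥0∞} (hp : 1 ≤ p) (hq : 1 < q)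
    (hν : 0 ≤ ν) (hC : C ≠ ⊤)
    (bound : ∀ u v : 𝓢(V, ℂ), HasCompactSupport u → HasCompactSupport v →
      eLpNorm' (bessel ν (schwartzMul u v)) q volume ≤
        C * eLpNorm' (bessel ν u) p volume * eLpNorm' (bessel ν v) q volume) : q ≤ p := by
  by_contra! hpq
  have hp0 : 0 < p := zero_lt_one.trans_le hp
  have hq0 : 0 < q := zero_lt_one.trans hq
  obtain ⟨g, χ, g_support, χ_support, g_ne_zero, g_real, absorbed⟩ := exists_dilations_absorbed V
  set n : ℝ := (Module.finrank ℝ V : ℝ)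
  have hn0 : 0 < n := Nat.cast_pos.2 Module.finrank_pos
  set η : ℝ := (n / p - n / q) / 2 with hη
  have hη0 : 0 < η := half_pos (sub_pos.2 (div_lt_div_of_pos_left hn0 hp0 hpq))
  obtain ⟨c, hc, lower⟩ := exists_le_eLpNorm'_bessel_dilate hν hq g_real g_ne_zero
  obtain ⟨K, hK, upper⟩ := hasDilationBound (V := V) hp hν g η hη0
  have hχ := schwartz_eLpNorm'_ne_top hq0 (bessel ν χ)
  set D := (C * K * eLpNorm' (bessel ν χ) q volume).toReal
  have decay (l : ℝ) (hl : 1 ≤ l) : c ≤ D * l ^ (-η) := by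
    have hl0 : 0 < l := zero_lt_one.trans_le hl
    lift l to ℝˣ using hl0.ne'.isUnit
    have scale_eq : (l : ℝ) ^ (ν + η - n / p) = l ^ (ν - n / q) * l ^ (-η) := by
      rw [← Real.rpow_add hl0, hη]
      ring_nf
    have dilated_bound : eLpNorm' (bessel ν (dilate l g)) q volume ≤
        C * K * eLpNorm' (bessel ν χ) q volume * ENNReal.ofReal ((l : ℝ) ^ (ν + η - n / p)) := by
      have module_bound := bound (dilate l g) χ
        (g_support.comp_smul hl0.ne') χ_support
      rw [absorbed l hl] at module_bound
      grw [module_bound, upper l hl]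
      exact le_of_eq (by ring)
    have real_bound := ENNReal.toReal_mono (by finiteness) dilated_bound
    rw [ENNReal.toReal_mul, ENNReal.toReal_ofReal (by positivity), scale_eq,
      mul_left_comm] at real_bound
    refine le_of_mul_le_mul_left (a := (l : ℝ) ^ (ν - n / q)) ?_ (by positivity)
    rw [mul_comm _ c]
    exact (lower l hl0).trans real_bound
  have limit := (tendsto_rpow_neg_atTop hη0).const_mul D
  rw [mul_zero] at limit
  exact hc.not_ge (ge_of_tendsto limit (Filter.eventually_atTop.2 ⟨1, decay⟩))

end Necessity

section EuclideanSpace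

variable {n : ℕ}

lemma besselPotential_coe (a : ℝ) (f : 𝓢(Euc n, ℂ)) : besselPotential n a f = bessel a f := by
  funext x
  rw [bessel_apply, besselPotential, Real.fourierInv_eq]
  rfl

lemma exists_schwartzMap_of_isTest {φ : Euc n → ℂ} (h : IsTest φ) : ∃ f : 𝓢(Euc n, ℂ), f = φ :=
  ⟨h.2.toSchwartzMap h.1, rfl⟩

lemma isTest_coe {f : 𝓢(Euc n, ℂ)} (hf : HasCompactSupport f) : IsTest f := ⟨f.smooth ⊤, hf⟩

lemma hNorm_coe {r : ℝ} (hr : 0 < r) (a : ℝ) (f : 𝓢(Euc n, ℂ)) :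
    HNorm n a r f = (eLpNorm' (bessel a f) r volume).toReal := by
  rw [HNorm, HNormE, besselPotential_coe, eLpNorm_eq_eLpNorm' (ENNReal.ofReal_pos.2 hr).ne'
    ENNReal.ofReal_ne_top, ENNReal.toReal_ofReal hr.le]

lemma hNormE_conjExpE {p : ℝ} (hp : 1 < p) (a : ℝ) (φ : Euc n → ℂ) :
    HNormE n a (conjExpE p) φ = HNorm n a p.conjExponent φ := by
  rw [HNorm, conjExpE, if_neg hp.not_ge, Real.conjExponent]

lemma exists_hNorm_mul_le_of_besselProductBound {e a b p q s : ℝ} (hp : 0 < p) (hq : 0 < q)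
    (hs : 0 < s) (h : BesselProductBound (Euc n) e a b p q s) :
    ∃ C : ℝ, 0 ≤ C ∧ ∀ φ ψ : Euc n → ℂ, IsTest φ → IsTest ψ →
      HNorm n e s (fun x => φ x * ψ x) ≤ C * HNorm n a p φ * HNorm n b q ψ := by
  obtain ⟨C, hC, bound⟩ := h
  refine ⟨C.toReal, ENNReal.toReal_nonneg, fun φ ψ hφ hψ => ?_⟩
  obtain ⟨u, rfl⟩ := exists_schwartzMap_of_isTest hφ
  obtain ⟨v, rfl⟩ := exists_schwartzMap_of_isTest hψ
  have u_ne_top := schwartz_eLpNorm'_ne_top hp (bessel a u)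
  have v_ne_top := schwartz_eLpNorm'_ne_top hq (bessel b v)
  rw [← funext (schwartzMul_apply u v), hNorm_coe hs, hNorm_coe hp, hNorm_coe hq,
    ← ENNReal.toReal_mul, ← ENNReal.toReal_mul]
  exact ENNReal.toReal_mono (by finiteness) (bound u v)

lemma le_of_hNorm_module_bound {p q ν C : ℝ} (hn : 0 < n) (hp : 1 ≤ p) (hq : 1 < q) (hν : 0 ≤ ν)
    (hC : 0 ≤ C) (bound : ∀ φ ψ : Euc n → ℂ, IsTest φ → IsTest ψ →
      HNorm n ν q (fun x => φ x * ψ x) ≤ C * HNorm n ν p φ * HNorm n ν q ψ) : q ≤ p := by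
  have : NeZero n := ⟨hn.ne'⟩
  refine le_of_bessel_module_bound (V := Euc n) hp hq hν (ENNReal.ofReal_ne_top (r := C))
    fun u v hu hv => ?_
  have hp0 : 0 < p := zero_lt_one.trans_le hp
  have hq0 : 0 < q := zero_lt_one.trans hq
  have u_ne_top := schwartz_eLpNorm'_ne_top hp0 (bessel ν u)
  have v_ne_top := schwartz_eLpNorm'_ne_top hq0 (bessel ν v)
  have real_bound := bound u v (isTest_coe hu) (isTest_coe hv)
  rw [← funext (schwartzMul_apply u v), hNorm_coe hq0, hNorm_coe hp0, hNorm_coe hq0,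
    ← ENNReal.toReal_ofReal hC, ← ENNReal.toReal_mul, ← ENNReal.toReal_mul] at real_bound
  exact (ENNReal.toReal_le_toReal (schwartz_eLpNorm'_ne_top hq0 _) (by finiteness)).1 real_bound

lemma besselProductBound_dim_zero {e a b p q s : ℝ} (hp : 0 < p) (hq : 0 < q) (hs : 0 < s) :
    BesselProductBound (Euc 0) e a b p q s := by
  have bessel_eq (c : ℝ) (f : 𝓢(Euc 0, ℂ)) : bessel c f = f := by
    refine schwartz_ext_fourier fun ξ => ?_
    rw [fourier_bessel, Subsingleton.elim ξ 0, besselSymbol, norm_zero]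
    simp
  have norm_eq {r : ℝ} (hr : 0 < r) (f : 𝓢(Euc 0, ℂ)) : eLpNorm' f r volume = ‖f 0‖ₑ := by
    rw [volume_euclideanSpace_eq_dirac, eLpNorm', lintegral_dirac,
      one_div, ENNReal.rpow_rpow_inv hr.ne']
  refine ⟨1, ENNReal.one_ne_top, fun u v => le_of_eq ?_⟩
  rw [bessel_eq, bessel_eq, bessel_eq, norm_eq hs, norm_eq hp, norm_eq hq, schwartzMul_apply,
    enorm_mul, one_mul]

end EuclideanSpace

section Exponents

variable [FiniteDimensional ℝ V] [MeasurableSpace V] [BorelSpace V]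

lemma besselProductBound_holder {p q s : ℝ} (hp : 0 < p) (hq : 0 < q) (h : 1 / s = 1 / p + 1 / q) :
    BesselProductBound V 0 0 0 p q s := by
  refine ⟨1, ENNReal.one_ne_top, fun u v => ?_⟩
  rw [bessel_zero, bessel_zero, bessel_zero, one_mul]
  exact eLpNorm'_schwartzMul_le hp hq h u v

-- The exponent `s = M / (M - α)` leaves the gap `1 / p + 1 / q - 1 / s = α / M`, and `n < M` makes
-- the Sobolev condition `n * (α / M) < α` strict.
lemma besselProductBound_of_holderConjugate {p q α M : ℝ} (hpq : p.HolderConjugate q)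
    (hqp : q ≤ p) (hα0 : 0 < α) (hαM : α * p < M) (hM : Module.finrank ℝ V < M) :
    BesselProductBound V α α α p q (M / (M - α)) := by
  have hα_lt : α < M := by nlinarith [hpq.lt]
  have hM0 : 0 < M := hα0.trans hα_lt
  have gap : 1 / p + 1 / q - 1 / (M / (M - α)) = α / M := by
    rw [one_div, one_div, hpq.inv_add_inv_eq_one, one_div_div, sub_div, div_self hM0.ne']
    ring
  have gap_lt : α / M < 1 / p := by
    rw [div_lt_div_iff₀ hM0 hpq.pos]
    linarith
  refine besselProductBound hα0.le le_rfl le_rfl hpq.lt.le hpq.symm.lt.le ?_ ?_ ?_ ?_ ?_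
  · rw [one_le_div (sub_pos.2 hα_lt)]
    linarith
  · rw [gap]
    positivity
  · rwa [gap]
  · rw [gap]
    exact gap_lt.trans_le (one_div_le_one_div_of_le hpq.symm.pos hqp)
  · rw [gap, mul_div_assoc', div_lt_iff₀ hM0]
    nlinarith

end Exponents

end

end BesselProduct

theorem interpolation_product_estimate_general {n : ℕ} (p α ε : ℝ) (hp1 : 1 < p)
    (hα0 : 0 ≤ α) (hα : α ≤ (n : ℝ) / p + ε) (hε : 0 < ε) (C₁ : ℝ) (hC₁ : 0 ≤ C₁)
    (h1 : ∀ φ ψ : Euc n → ℂ, IsTest φ → IsTest ψ →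
      HNormE n ((n : ℝ) / p + ε) (conjExpE p) (fun x => φ x * ψ x) ≤
        C₁ * HNorm n ((n : ℝ) / p + ε) p φ *
          HNormE n ((n : ℝ) / p + ε) (conjExpE p) ψ) :
    ∃ C : ℝ, 0 ≤ C ∧ ∀ φ ψ : Euc n → ℂ, IsTest φ → IsTest ψ →
      HNorm n α (((n : ℝ) + p * ε) / ((n : ℝ) + p * ε - α)) (fun x => φ x * ψ x) ≤
        C * HNorm n α p φ * HNormE n α (conjExpE p) ψ := by
  have hpq : p.HolderConjugate p.conjExponent := .conjExponent hp1
  have hp0 : 0 < p := hpq.pos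
  have hν : 0 < n / p + ε := by positivity
  have hM : (n : ℝ) + p * ε = p * (n / p + ε) := by field_simp
  have hM0 : 0 < (n : ℝ) + p * ε := by positivity
  simp only [BesselProduct.hNormE_conjExpE hp1] at h1 ⊢
  rcases hα.eq_or_lt with rfl | hα
  · refine ⟨C₁, hC₁, ?_⟩
    rwa [hM, ← sub_one_mul, mul_div_mul_right _ _ hν.ne']
  have hαM : α * p < n + p * ε := by nlinarith
  have hs : 0 < (n + p * ε) / (n + p * ε - α) := div_pos hM0 (by nlinarith)
  refine BesselProduct.exists_hNorm_mul_le_of_besselProductBound hp0 hpq.symm.pos hs ?_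
  rcases hα0.eq_or_lt with rfl | hα0
  · exact BesselProduct.besselProductBound_holder hp0 hpq.symm.pos <| by
      simp only [one_div, sub_zero, div_self hM0.ne', inv_one, hpq.inv_add_inv_eq_one]
  rcases n.eq_zero_or_pos with rfl | hn
  · exact BesselProduct.besselProductBound_dim_zero hp0 hpq.symm.pos hs
  have hqp : p.conjExponent ≤ p :=
    BesselProduct.le_of_hNorm_module_bound hn hp1.le hpq.symm.lt hν.le hC₁ h1
  exact BesselProduct.besselProductBound_of_holderConjugate hpq hqp hα0 hαM <| by
    rw [finrank_euclideanSpace_fin]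
    nlinarith

/-- For `1<p<∞`, `0 ≤ α ≤ n/p`, `ε>0`, `ν = n/p+ε`: from
`‖φψ‖_{H^ν_{p'}} ≤ C‖φ‖_{H^ν_p}‖ψ‖_{H^ν_{p'}}` and Hölder's inequality
`‖φψ‖_{L_1} ≤ ‖φ‖_{L_p}‖ψ‖_{L_{p'}}`, multilinear interpolation yields
`‖φψ‖_{H^α_s} ≤ C‖φ‖_{H^α_p}‖ψ‖_{H^α_{p'}}` with `s = (n+pε)/(n+pε-α)`. -/
theorem interpolation_product_estimate {n : ℕ} (p α ε : ℝ) (hp1 : 1 < p)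
    (hα0 : 0 ≤ α) (hα : α ≤ (n : ℝ) / p) (hε : 0 < ε) (C₁ : ℝ) (hC₁ : 0 ≤ C₁)
    (h1 : ∀ φ ψ : Euc n → ℂ, IsTest φ → IsTest ψ →
      HNormE n ((n : ℝ) / p + ε) (conjExpE p) (fun x => φ x * ψ x) ≤
        C₁ * HNorm n ((n : ℝ) / p + ε) p φ *
          HNormE n ((n : ℝ) / p + ε) (conjExpE p) ψ)
    (h2 : ∀ φ ψ : Euc n → ℂ, IsTest φ → IsTest ψ →
      HNorm n 0 1 (fun x => φ x * ψ x) ≤ HNorm n 0 p φ * HNormE n 0 (conjExpE p) ψ) :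
    ∃ C : ℝ, 0 ≤ C ∧ ∀ φ ψ : Euc n → ℂ, IsTest φ → IsTest ψ →
      HNorm n α (((n : ℝ) + p * ε) / ((n : ℝ) + p * ε - α)) (fun x => φ x * ψ x) ≤
        C * HNorm n α p φ * HNormE n α (conjExpE p) ψ :=
  interpolation_product_estimate_general p α ε hp1 hα0 (by linarith) hε C₁ hC₁ h1
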